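/- Let Q be a computable real number with Q > 0, and let T ∈ (0,1). If W(Q,T) = ∑_{p ∈ dom U} |p|^Q · 2^{−|p|/T} is a computable real number, then: (i) T is right-computable but not left-computable; (ii) T is Chaitin T-random and T-compressible. -/

import Mathlib

open Filter

/-- A set of finite binary strings is prefix-free if no element of it is a
prefix of another (distinct) element of it. -/
def PrefixFree (S : Set (List Bool)) : Prop :=
  ∀ p ∈ S, ∀ q ∈ S, p <+: q → p = q

/-- A computer: a partial recursive function from finite binary strings to
finite binary strings whose domain is a prefix-free set. -/
structure Computer where
  f : List Bool →. List Bool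
  partrec : Partrec f
  prefixFree : PrefixFree {p | (f p).Dom}

/-- The domain of a computer. -/
def Computer.domain (C : Computer) : Set (List Bool) := {p | (C.f p).Dom}

/-- A computer `U` is optimal if every computer can be simulated on `U` with
only a constant increase in program length. -/
def IsOptimal (U : Computer) : Prop :=
  ∀ C : Computer, ∃ d : ℕ, ∀ p : List Bool, (C.f p).Dom →
    ∃ p' : List Bool, p'.length ≤ p.length + d ∧ ∀ s, s ∈ C.f p → s ∈ U.f p'

/-- Program-size complexity `H(s)`: the minimal length of a program `p`
with `U(p) = s`. -/
noncomputable def H (U : Computer) (s : List Bool) : ℕ :=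
  sInf {n | ∃ p : List Bool, p.length = n ∧ s ∈ U.f p}

/-- The `n`-th bit (`n ≥ 1`) of the base-two expansion of `x mod 1`
(the expansion chosen with infinitely many zeros). -/
noncomputable def binDigit (x : ℝ) (n : ℕ) : Bool :=
  decide (⌊Int.fract x * 2 ^ n⌋ % 2 = 1)

/-- The first `n` bits of the base-two expansion of `x mod 1` (with
infinitely many zeros). -/
noncomputable def bits (x : ℝ) (n : ℕ) : List Bool :=
  (List.range n).map fun i => binDigit x (i + 1)

/-- A real `x` is weakly Chaitin `D`-random (w.r.t. the computer `U`). -/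
def WeaklyChaitinRandom (U : Computer) (D x : ℝ) : Prop :=
  ∃ c : ℝ, ∀ n : ℕ, 1 ≤ n → D * n - c ≤ (H U (bits x n) : ℝ)

/-- A real `x` is Chaitin `D`-random (w.r.t. the computer `U`). -/
def ChaitinRandom (U : Computer) (D x : ℝ) : Prop :=
  Tendsto (fun n : ℕ => (H U (bits x n) : ℝ) - D * n) atTop atTop

/-- A real `x` is `D`-compressible (w.r.t. the computer `U`). -/
def DCompressible (U : Computer) (D x : ℝ) : Prop :=
  Filter.limsup (fun n : ℕ => (H U (bits x n) : ℝ) / n) atTop ≤ D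

/-- A computable real number. -/
def ComputableReal (T : ℝ) : Prop :=
  ∃ f : ℕ → ℚ, Computable f ∧ ∀ n : ℕ, 1 ≤ n → |T - (f n : ℝ)| < 1 / n

/-- A right-computable real number. -/
def RightComputable (T : ℝ) : Prop :=
  ∃ g : ℕ → ℚ, Computable g ∧ (∀ n, T ≤ (g n : ℝ)) ∧
    Tendsto (fun n => ((g n : ℚ) : ℝ)) atTop (nhds T)

/-- A left-computable real number. -/
def LeftComputable (T : ℝ) : Prop := RightComputable (-T)

/-- The term `2 ^ (-|p| / T)` of the partition function `Z(T)`. -/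
noncomputable def zterm (U : Computer) (T : ℝ) (p : U.domain) : ℝ :=
  (2 : ℝ) ^ (-((p : List Bool).length : ℝ) / T)

/-- The term `|p| ^ Q * 2 ^ (-|p| / T)` of `W(Q,T)`. -/
noncomputable def wterm (U : Computer) (Q T : ℝ) (p : U.domain) : ℝ :=
  ((p : List Bool).length : ℝ) ^ Q * (2 : ℝ) ^ (-((p : List Bool).length : ℝ) / T)

/-- The term `|p| * 2 ^ (-|p| / T)` of `W(1,T)`. -/
noncomputable def wlterm (U : Computer) (T : ℝ) (p : U.domain) : ℝ :=
  ((p : List Bool).length : ℝ) * (2 : ℝ) ^ (-((p : List Bool).length : ℝ) / T)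

/-- The term `|p| ^ 2 * 2 ^ (-|p| / T)` of `W(2,T)`. -/
noncomputable def wsqterm (U : Computer) (T : ℝ) (p : U.domain) : ℝ :=
  ((p : List Bool).length : ℝ) ^ 2 * (2 : ℝ) ^ (-((p : List Bool).length : ℝ) / T)

/-- A lower-computable function `f : ℕ⁺ → [0,∞)` (represented on `ℕ`,
with all conditions imposed on positive arguments). -/
def LowerComputableFun (f : ℕ → ℝ) : Prop :=
  ∃ a : ℕ → ℕ → ℚ, Computable₂ a ∧
    (∀ k n : ℕ, 1 ≤ k → 1 ≤ n → (a k n : ℝ) ≤ f n) ∧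
    (∀ n : ℕ, 1 ≤ n → Tendsto (fun k => ((a k n : ℚ) : ℝ)) atTop (nhds (f n)))

/-- A lower-computable semi-measure on finite binary strings. -/
def LowerComputableSemiMeasure (r : List Bool → ℝ) : Prop :=
  (∀ s, 0 ≤ r s) ∧ (∀ s, r s ≤ 1) ∧ Summable r ∧ (∑' s, r s) ≤ 1 ∧
    ∃ f : ℕ → List Bool → ℚ, Computable₂ f ∧
      (∀ n s, ((f n s : ℚ) : ℝ) ≤ r s) ∧
      (∀ s, Tendsto (fun n => ((f n s : ℚ) : ℝ)) atTop (nhds (r s)))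

/-- A universal probability. -/
def UniversalProbability (m : List Bool → ℝ) : Prop :=
  LowerComputableSemiMeasure m ∧
    ∀ r : List Bool → ℝ, LowerComputableSemiMeasure r →
      ∃ c : ℝ, 0 < c ∧ ∀ s, c * r s ≤ m s

/-!
Every partial sum of `W(Q, t)` over a nonempty finite set of programs increases strictly with `t`.
Hence, for `0 < t`, we have `T < t` if and only if some finite partial sum of `W(Q, t)` exceeds the
number `W(Q, T)`. Such partial sums can be searched for, so `T` is right-computable.

Randomness: given `T_n`, search for a finite set of programs whose partial sum at
`t = T_n + 2 ^ (-n)` exceeds `W(Q, T)`. A shortest program `p` for a string that no program of the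
set outputs has length at most `H(T_n) + O(1)`. Its weight at `T` is missing from the partial sum,
and partial sums are Lipschitz in `t`, so `|p| ^ Q * 2 ^ (-|p| / T) ≤ C * 2 ^ (-n)`, that is,
`Q * T * log₂ |p| - O(1) ≤ |p| - T * n`. The left-hand side tends to infinity because `Q > 0`.

If `T` were left-computable as well, both of its rational cuts would be recursively enumerable, so
`T_n` could be found from `n` up to boundedly many choices. This would give `H(T_n) = O(√n)`,
against randomness.

Compressibility: let `T < t < 1` be rational and let `m ≥ t * n`. The first `m` bits of the halting
probability yield finite sets of programs whose omitted programs have length greater than `m` and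
total Kraft weight at most `2 ^ (-m)`; at temperature `T` these weigh at most
`C * 2 ^ (-m / t) ≤ C * 2 ^ (-n)`. As partial sums have a positive slope in the temperature,
comparing the partial sums at dyadic `u / 2 ^ n` with the computable number `W(Q, T)` determines
`T * 2 ^ n` up to `O(1)`. Hence `H(T_n) ≤ t * n + O(√n)`.
-/

section RecursivelyEnumerable

variable {α β γ : Type*} [Primcodable α] [Primcodable β] [Primcodable γ]

attribute [fun_prop] Computable Computable.id Computable.const Computable.comp Computable.pair
  Computable.fst Computable.snd

@[fun_prop]
theorem computable_nat_add {f g : α → ℕ} (hf : Computable f) (hg : Computable g) :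
    Computable fun a => f a + g a :=
  Primrec.nat_add.to_comp.comp hf hg

@[fun_prop]
theorem computable_nat_sub {f g : α → ℕ} (hf : Computable f) (hg : Computable g) :
    Computable fun a => f a - g a :=
  Primrec.nat_sub.to_comp.comp hf hg

@[fun_prop]
theorem computable_nat_mul {f g : α → ℕ} (hf : Computable f) (hg : Computable g) :
    Computable fun a => f a * g a :=
  Primrec.nat_mul.to_comp.comp hf hg

@[fun_prop]
theorem computable_nat_div {f g : α → ℕ} (hf : Computable f) (hg : Computable g) :
    Computable fun a => f a / g a :=
  Primrec.nat_div.to_comp.comp hf hg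

@[fun_prop]
theorem computable_nat_pow {f g : α → ℕ} (hf : Computable f) (hg : Computable g) :
    Computable fun a => f a ^ g a :=
  (Primrec₂.unpaired'.1 Nat.Primrec.pow).to_comp.comp hf hg

@[fun_prop]
theorem computable_list_length {f : α → List β} (hf : Computable f) :
    Computable fun a => (f a).length :=
  Primrec.list_length.to_comp.comp hf

@[fun_prop]
theorem computable_list_append {f g : α → List β} (hf : Computable f) (hg : Computable g) :
    Computable fun a => f a ++ g a :=
  Primrec.list_append.to_comp.comp hf hg

@[fun_prop]
theorem computable_list_map_fst {f : α → List (β × γ)} (hf : Computable f) :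
    Computable fun a => (f a).map Prod.fst :=
  (Primrec.list_map .id (Primrec.fst.comp .snd).to₂).to_comp.comp hf

@[fun_prop]
theorem computable_list_map_snd {f : α → List (β × γ)} (hf : Computable f) :
    Computable fun a => (f a).map Prod.snd :=
  (Primrec.list_map .id (Primrec.snd.comp .snd).to₂).to_comp.comp hf

@[fun_prop]
theorem computable_list_range {f : α → ℕ} (hf : Computable f) :
    Computable fun a => List.range (f a) :=
  Primrec.list_range.to_comp.comp hf

theorem rePred_nat_lt {f g : α → ℕ} (hf : Computable f) (hg : Computable g) :
    REPred fun a => f a < g a :=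
  (Primrec.nat_lt.decide.to_comp.comp hf hg).computablePred.to_re

theorem rePred_nat_le {f g : α → ℕ} (hf : Computable f) (hg : Computable g) :
    REPred fun a => f a ≤ g a :=
  (Primrec.nat_le.decide.to_comp.comp hf hg).computablePred.to_re

theorem rePred_eq {f g : α → β} (hf : Computable f) (hg : Computable g) :
    REPred fun a => f a = g a := by
  classical exact (Primrec.eq.decide.to_comp.comp hf hg).computablePred.to_re

theorem rePred_comp {P : β → Prop} {f : α → β} (hP : REPred P) (hf : Computable f) :
    REPred fun a => P (f a) :=
  Partrec.comp hP hf

theorem rePred_and {P Q : α → Prop} (hP : REPred P) (hQ : REPred Q) :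
    REPred fun a => P a ∧ Q a :=
  (Partrec.bind hP (Partrec.comp hQ Computable.fst).to₂).of_eq fun a =>
    Part.ext fun _ => by simp

theorem rePred_or {P Q : α → Prop} (hP : REPred P) (hQ : REPred Q) :
    REPred fun a => P a ∨ Q a := by
  obtain ⟨φ, hφ, hφPQ⟩ := Partrec.merge' hP hQ
  exact hφ.dom_re.of_eq fun a => by simpa [Part.assert] using (hφPQ a).2

theorem exists_primrecRel_of_rePred {P : α → Prop} (hP : REPred P) :
    ∃ R : ℕ → α → Prop, Monotone R ∧ PrimrecRel R ∧ ∀ a, P a ↔ ∃ n, R n a := by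
  obtain ⟨c, hc⟩ := Nat.Partrec.Code.exists_code.1 hP
  refine ⟨fun n a => (Nat.Partrec.Code.evaln n c (Encodable.encode a)).isSome, ?_, ?_, ?_⟩
  · intro m n hmn a h
    obtain ⟨x, hx⟩ := Option.isSome_iff_exists.1 h
    exact Option.isSome_iff_exists.2 ⟨x, Nat.Partrec.Code.evaln_mono hmn hx⟩
  · exact Primrec.primrecPred <| (Primrec.option_isSome.comp
      (Nat.Partrec.Code.primrec_evaln.comp ((Primrec.fst.pair (.const c)).pair
        (Primrec.encode.comp .snd)))).of_eq fun _ => (Bool.decide_coe _).symm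
  · intro a
    have hdom : P a ↔ (c.eval (Encodable.encode a)).Dom := by simp [hc, Part.assert]
    simp only [hdom, Part.dom_iff_mem, Option.isSome_iff_exists,
      Nat.Partrec.Code.evaln_complete, Option.mem_def]
    exact exists_comm

theorem exists_computable_search_of_rePred {P : α × β → Prop} (hP : REPred P) :
    ∃ search : α → ℕ → Option β, Computable₂ search ∧
      ∀ a b, P (a, b) ↔ ∃ n, search a n = some b := by
  classical
  obtain ⟨R, -, hR, hPR⟩ := exists_primrecRel_of_rePred hP
  refine ⟨fun a n => (Encodable.decode n.unpair.1).bind fun b =>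
    if R n.unpair.2 (a, b) then some b else none, ?_, fun a b => (hPR _).trans ⟨?_, ?_⟩⟩
  · have hR' : PrimrecPred fun q : (α × ℕ) × β => R q.1.2.unpair.2 (q.1.1, q.2) :=
      PrimrecRel.comp hR
        (Primrec.snd.comp (Primrec.unpair.comp (Primrec.snd.comp .fst)))
        ((Primrec.fst.comp .fst).pair .snd)
    exact Primrec.to_comp <| Primrec.option_bind
      (Primrec.decode.comp (Primrec.fst.comp (Primrec.unpair.comp .snd)))
      (Primrec.ite hR' (Primrec.option_some.comp .snd) (.const none)).to₂
  · rintro ⟨n, hn⟩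
    exact ⟨Nat.pair (Encodable.encode b) n, by simp [hn]⟩
  · rintro ⟨n, hn⟩
    obtain ⟨b', -, h⟩ := Option.bind_eq_some_iff.1 hn
    obtain ⟨hR, rfl⟩ : R n.unpair.2 (a, b') ∧ b' = b := by simpa using h
    exact ⟨_, hR⟩

theorem exists_partrec_of_rePred {P : α × β → Prop} (hP : REPred P) :
    ∃ φ : α →. β, Partrec φ ∧ (∀ a, ∀ b ∈ φ a, P (a, b)) ∧
      ∀ a, (∃ b, P (a, b)) → (φ a).Dom := by
  obtain ⟨search, hsearch, hP⟩ := exists_computable_search_of_rePred hP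
  refine ⟨fun a => Nat.rfindOpt (search a), Partrec.rfindOpt hsearch, fun a b hb => ?_, ?_⟩
  · exact (hP a b).2 (Nat.rfindOpt_spec hb)
  · rintro a ⟨b, hb⟩
    obtain ⟨n, hn⟩ := (hP a b).1 hb
    exact Nat.rfindOpt_dom.2 ⟨n, b, hn⟩

theorem exists_computable_range_eq_of_rePred {P : α → Prop} (hP : REPred P) (hne : ∃ a, P a) :
    ∃ e : ℕ → α, Computable e ∧ ∀ a, P a ↔ ∃ n, e n = a := by
  obtain ⟨a₀, ha₀⟩ := hne
  obtain ⟨search, hsearch, hP⟩ :=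
    exists_computable_search_of_rePred (rePred_comp (f := @Prod.snd Unit α) hP .snd)
  refine ⟨fun n => (search () n).getD a₀, ?_, fun a => ⟨fun ha => ?_, ?_⟩⟩
  · exact Primrec.option_getD.to_comp.comp
      (hsearch.comp (Computable.const ()) Computable.id) (Computable.const a₀)
  · obtain ⟨n, hn⟩ := (hP () a).1 ha
    exact ⟨n, by simp [hn]⟩
  · rintro ⟨n, rfl⟩
    cases h : search () n with
    | none => simpa [h] using ha₀
    | some b => simpa [h] using (hP () b).2 ⟨n, h⟩

theorem rePred_exists {P : α × β → Prop} (hP : REPred P) : REPred fun a => ∃ b, P (a, b) := by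
  obtain ⟨φ, hφ, hφP, hdom⟩ := exists_partrec_of_rePred hP
  exact hφ.dom_re.of_eq fun a => ⟨fun h => ⟨_, hφP a _ (Part.get_mem h)⟩, hdom a⟩

theorem rePred_forall_mem {P : α × β → Prop} (hP : REPred P) :
    REPred fun p : α × List β => ∀ b ∈ p.2, P (p.1, b) := by
  obtain ⟨R, hmono, hR, hPR⟩ := exists_primrecRel_of_rePred hP
  have hR' : PrimrecRel fun (b : β) (q : ℕ × α) => R q.1 (q.2, b) :=
    hR.comp (Primrec.fst.comp .snd) ((Primrec.snd.comp .snd).pair .fst)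
  have hall : REPred fun q : (α × List β) × ℕ => ∀ b ∈ q.1.2, R q.2 (q.1.1, b) :=
    (hR'.forall_mem_list.comp (Primrec.snd.comp .fst)
      (Primrec.snd.pair (Primrec.fst.comp .fst))).computablePred.to_re
  refine (rePred_exists hall).of_eq fun p => ⟨fun ⟨n, h⟩ b hb => (hPR _).2 ⟨n, h b hb⟩, ?_⟩
  intro h
  have hbound : ∀ b ∈ p.2, ∃ n, R n (p.1, b) := fun b hb => (hPR _).1 (h b hb)
  choose! N hN using hbound
  exact ⟨(p.2.map N).sum, fun b hb =>
    hmono (List.single_le_sum (by simp) _ (List.mem_map_of_mem hb)) _ (hN b hb)⟩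

theorem rePred_mem_partrec {f : α →. β} (hf : Partrec f) :
    REPred fun p : α × β => p.2 ∈ f p.1 := by
  classical
  have heq : REPred fun q : (α × β) × β => q.1.2 = q.2 := rePred_eq (by fun_prop) (by fun_prop)
  refine ((hf.comp Computable.fst).bind heq.to₂).dom_re.of_eq fun p => ?_
  simp [Part.dom_iff_mem]

theorem exists_computable_of_rePred {P : α × β → Prop} (hP : REPred P)
    (htotal : ∀ a, ∃ b, P (a, b)) : ∃ f : α → β, Computable f ∧ ∀ a, P (a, f a) := by
  obtain ⟨φ, hφ, hφP, hdom⟩ := exists_partrec_of_rePred hP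
  exact ⟨fun a => (φ a).get (hdom a (htotal a)), hφ.of_eq_tot fun a => Part.get_mem _,
    fun a => hφP a _ (Part.get_mem _)⟩

theorem computable_of_rePred_graph {f : α → β} (h : REPred fun p : α × β => f p.1 = p.2) :
    Computable f := by
  obtain ⟨g, hg, hfg⟩ := exists_computable_of_rePred h fun a => ⟨f a, rfl⟩
  exact hg.of_eq fun a => (hfg a).symm

end RecursivelyEnumerable

section RationalArithmetic

open Encodable

attribute [local instance] Encodable.decidableRangeEncode

theorem computable_encode_of_primrecPred_range {α : Type*} [E : Encodable α] [Infinite α]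
    (hrange : PrimrecPred (· ∈ Set.range (@encode α E))) :
    letI := Denumerable.ofEncodableOfInfinite α
    Computable (@encode α E) := by
  let := Denumerable.ofEncodableOfInfinite α
  -- The denumerable structure numbers the elements in the order of their codes, so the number of
  -- `a` is the count of codes below `encode a`, and the code is recovered by search.
  have hcount : Computable (Nat.count (· ∈ Set.range (@encode α E))) :=
    (Primrec.list_length.comp ((Primrec.listFilter hrange).comp .list_range)).to_comp.of_eq
      fun n => (List.countP_eq_length_filter ..).symm
  refine computable_of_rePred_graph <| (rePred_and
    (rePred_eq (hcount.comp .snd) (Computable.encode.comp .fst))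
    (rePred_comp (f := Prod.snd) hrange.computablePred.to_re .snd)).of_eq fun ⟨a, y⟩ => ?_
  constructor
  · rintro ⟨h, hy⟩
    exact Nat.count_injective (Set.mem_range_self a) hy h.symm
  · intro (h : encode a = y)
    subst h
    exact ⟨rfl, Set.mem_range_self a⟩

theorem encode_int_natCast (n : ℕ) : encode (n : ℤ) = 2 * n := rfl

theorem encode_int_negSucc (n : ℕ) : encode (Int.negSucc n) = 2 * n + 1 := rfl

theorem primrec_int_toNat : Primrec Int.toNat := by
  refine (Primrec.ite (Primrec.eq.comp (Primrec.nat_mod.comp .encode (.const 2)) (.const 0))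
    (Primrec.nat_div.comp .encode (.const 2)) (.const 0)).of_eq fun z => ?_
  cases z with
  | ofNat n => simp [encode_int_natCast]
  | negSucc n => simp [encode_int_negSucc, Nat.add_mod]

theorem primrec_int_neg_toNat : Primrec fun z : ℤ => (-z).toNat := by
  refine (Primrec.ite (Primrec.eq.comp (Primrec.nat_mod.comp .encode (.const 2)) (.const 0))
    (.const 0) (Primrec.succ.comp (Primrec.nat_div.comp .encode (.const 2)))).of_eq fun z => ?_
  cases z with
  | ofNat n => simp [encode_int_natCast]
  | negSucc n => simp [encode_int_negSucc]; omega

theorem primrec_int_natAbs : Primrec Int.natAbs :=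
  (Primrec.nat_add.comp primrec_int_toNat primrec_int_neg_toNat).of_eq fun z => by omega

theorem primrecRel_coprime : PrimrecRel Nat.Coprime := by
  have hfactor : PrimrecRel fun d (p : ℕ × ℕ) => p.1 % d = 0 ∧ p.2 % d = 0 ∧ d ≠ 1 :=
    (Primrec.eq.comp (Primrec.nat_mod.comp (Primrec.fst.comp .snd) .fst) (.const 0)).and <|
      (Primrec.eq.comp (Primrec.nat_mod.comp (Primrec.snd.comp .snd) .fst) (.const 0)).and
        (Primrec.eq.comp .fst (.const 1)).not
  have hsearch : PrimrecPred fun p : ℕ × ℕ =>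
      ¬ ∃ d ∈ List.range (p.1 + p.2 + 1), p.1 % d = 0 ∧ p.2 % d = 0 ∧ d ≠ 1 :=
    (hfactor.exists_mem_list.comp
      (Primrec.list_range.comp (Primrec.succ.comp (Primrec.nat_add.comp .fst .snd))) .id).not
  refine hsearch.of_eq fun ⟨a, b⟩ => ?_
  constructor
  · intro h
    by_contra hab
    have hle : a.gcd b ≤ a + b := by
      rcases a.eq_zero_or_pos with rfl | ha
      · simp
      · exact (Nat.gcd_le_left b ha).trans (Nat.le_add_right a b)
    exact h ⟨a.gcd b, List.mem_range.2 (Nat.lt_succ_of_le hle),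
      Nat.mod_eq_zero_of_dvd (Nat.gcd_dvd_left a b),
      Nat.mod_eq_zero_of_dvd (Nat.gcd_dvd_right a b), hab⟩
  · rintro hab ⟨d, -, ha, hb, hd⟩
    exact hd (Nat.eq_one_of_dvd_coprimes hab (Nat.dvd_of_mod_eq_zero ha)
      (Nat.dvd_of_mod_eq_zero hb))

theorem mem_range_encode_rat_iff (y : ℕ) :
    y ∈ Set.range (@encode ℚ Rat.instEncodable) ↔
      0 < y.unpair.2 ∧ (Denumerable.ofNat ℤ y.unpair.1).natAbs.Coprime y.unpair.2 := by
  have hencode (q : ℚ) : @encode ℚ Rat.instEncodable q = Nat.pair (encode q.num) q.den := rfl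
  constructor
  · rintro ⟨q, rfl⟩
    rw [hencode, Nat.unpair_pair, Denumerable.ofNat_encode]
    exact ⟨q.pos, q.reduced⟩
  · rintro ⟨hpos, hcop⟩
    exact ⟨⟨Denumerable.ofNat ℤ y.unpair.1, y.unpair.2, hpos.ne', hcop⟩, by
      rw [hencode, Denumerable.encode_ofNat, Nat.pair_unpair]⟩

theorem computable_rat_num_den : Computable fun q : ℚ => (q.num, q.den) := by
  have hencode : Computable (@encode ℚ Rat.instEncodable) :=
    computable_encode_of_primrecPred_range <| PrimrecPred.of_eq
      ((Primrec.nat_lt.comp (.const 0) (Primrec.snd.comp .unpair)).and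
        (primrecRel_coprime.comp
          (primrec_int_natAbs.comp ((Primrec.ofNat ℤ).comp (Primrec.fst.comp .unpair)))
          (Primrec.snd.comp .unpair)))
      fun y => (mem_range_encode_rat_iff y).symm
  have hunpair : Computable fun q : ℚ => (encode q.num, q.den) :=
    (Primrec.unpair.to_comp.comp hencode).of_eq fun q => Nat.unpair_pair _ _
  exact (Computable.encode_iff.1 (Computable.fst.comp hunpair)).pair (Computable.snd.comp hunpair)

variable {α : Type*} [Primcodable α] {f g : α → ℚ}

@[fun_prop]
theorem computable_rat_den (hf : Computable f) :
    Computable fun a => (f a).den :=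
  Computable.snd.comp (computable_rat_num_den.comp hf)

@[fun_prop]
theorem computable_rat_num_toNat (hf : Computable f) :
    Computable fun a => (f a).num.toNat :=
  primrec_int_toNat.to_comp.comp (Computable.fst.comp (computable_rat_num_den.comp hf))

@[fun_prop]
theorem computable_rat_neg_num_toNat (hf : Computable f) :
    Computable fun a => (-(f a).num).toNat :=
  primrec_int_neg_toNat.to_comp.comp (Computable.fst.comp (computable_rat_num_den.comp hf))

theorem rat_eq_toNat_sub_toNat_div_den (q : ℚ) :
    q = ((q.num.toNat : ℚ) - (-q.num).toNat) / q.den := by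
  conv_lhs => rw [← q.num_div_den, ← Int.toNat_sub_toNat_neg q.num]
  push_cast
  rfl

theorem rePred_rat_lt (hf : Computable f) (hg : Computable g) : REPred fun a => f a < g a := by
  refine (rePred_nat_lt
    (f := fun a => (f a).num.toNat * (g a).den + (-(g a).num).toNat * (f a).den)
    (g := fun a => (g a).num.toNat * (f a).den + (-(f a).num).toNat * (g a).den)
    (by fun_prop) (by fun_prop)).of_eq fun a => ?_
  have hfden : (0 : ℚ) < (f a).den := mod_cast (f a).pos
  have hgden : (0 : ℚ) < (g a).den := mod_cast (g a).pos
  conv_rhs => rw [rat_eq_toNat_sub_toNat_div_den (f a), rat_eq_toNat_sub_toNat_div_den (g a)]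
  rw [div_lt_div_iff₀ hfden hgden, ← Nat.cast_lt (α := ℚ)]
  push_cast
  constructor <;> intro h <;> linarith

theorem computable_rat_of_eq_sub_div {a b c : α → ℕ} (ha : Computable a) (hb : Computable b)
    (hc : Computable c) (hc0 : ∀ x, c x ≠ 0) (hf : ∀ x, f x = ((a x : ℚ) - b x) / c x) :
    Computable f := by
  refine computable_of_rePred_graph <| (rePred_eq
    (f := fun p : α × ℚ => a p.1 * p.2.den + (-p.2.num).toNat * c p.1)
    (g := fun p : α × ℚ => p.2.num.toNat * c p.1 + b p.1 * p.2.den)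
    (by fun_prop) (by fun_prop)).of_eq fun ⟨x, q⟩ => ?_
  have hcx : (c x : ℚ) ≠ 0 := mod_cast hc0 x
  have hden : (q.den : ℚ) ≠ 0 := mod_cast q.den_nz
  conv_rhs => rw [hf, rat_eq_toNat_sub_toNat_div_den q]
  rw [div_eq_div_iff hcx hden, ← Nat.cast_inj (R := ℚ)]
  push_cast
  constructor <;> intro h <;> linarith

@[fun_prop]
theorem computable_rat_add (hf : Computable f) (hg : Computable g) :
    Computable fun a => f a + g a := by
  refine computable_rat_of_eq_sub_div
    (a := fun a => (f a).num.toNat * (g a).den + (g a).num.toNat * (f a).den)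
    (b := fun a => (-(f a).num).toNat * (g a).den + (-(g a).num).toNat * (f a).den)
    (c := fun a => (f a).den * (g a).den) (by fun_prop) (by fun_prop) (by fun_prop)
    (fun a => mul_ne_zero (f a).den_nz (g a).den_nz) fun a => ?_
  have hfden : ((f a).den : ℚ) ≠ 0 := mod_cast (f a).den_nz
  have hgden : ((g a).den : ℚ) ≠ 0 := mod_cast (g a).den_nz
  conv_lhs => rw [rat_eq_toNat_sub_toNat_div_den (f a), rat_eq_toNat_sub_toNat_div_den (g a)]
  rw [div_add_div _ _ hfden hgden]
  push_cast
  ring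

@[fun_prop]
theorem computable_rat_neg (hf : Computable f) : Computable fun a => -f a :=
  computable_rat_of_eq_sub_div (a := fun a => (-(f a).num).toNat)
    (b := fun a => (f a).num.toNat) (c := fun a => (f a).den) (by fun_prop) (by fun_prop)
    (by fun_prop) (fun a => (f a).den_nz) fun a => by
      conv_lhs => rw [rat_eq_toNat_sub_toNat_div_den (f a)]
      rw [← neg_div, neg_sub]

theorem computable_natCast_div {a c : α → ℕ} (ha : Computable a) (hc : Computable c)
    (hc0 : ∀ x, c x ≠ 0) : Computable fun x => (a x : ℚ) / c x :=
  computable_rat_of_eq_sub_div ha (Computable.const 0) hc hc0 fun x => by simp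

theorem computable_rat_inv (hf : Computable f) : Computable fun a => (f a)⁻¹ := by
  -- The truncated difference in `c` is `1` at `f a = 0` and `0` elsewhere.
  refine computable_rat_of_eq_sub_div (a := fun a => (f a).num.toNat * (f a).den)
    (b := fun a => (-(f a).num).toNat * (f a).den)
    (c := fun a => (f a).num.toNat ^ 2 + (-(f a).num).toNat ^ 2 +
      (1 - ((f a).num.toNat + (-(f a).num).toNat)))
    (by fun_prop) (by fun_prop) (by fun_prop) (fun a h => ?_) fun a => ?_
  · obtain ⟨⟨h₁, h₂⟩, h₃⟩ : ((f a).num.toNat = 0 ∧ (-(f a).num).toNat = 0) ∧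
        1 - ((f a).num.toNat + (-(f a).num).toNat) = 0 := by simpa using h
    omega
  · have hden : ((f a).den : ℚ) ≠ 0 := mod_cast (f a).den_nz
    conv_lhs => rw [rat_eq_toNat_sub_toNat_div_den (f a), inv_div]
    obtain ⟨h₁, h₂⟩ | ⟨h₁, h₂⟩ | ⟨h₁, h₂⟩ :
        ((f a).num.toNat = 0 ∧ (-(f a).num).toNat = 0) ∨
          ((f a).num.toNat = 0 ∧ (-(f a).num).toNat ≠ 0) ∨
            ((f a).num.toNat ≠ 0 ∧ (-(f a).num).toNat = 0) := by omega
    · simp [h₁, h₂]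
    · have h₂' : ((-(f a).num).toNat : ℚ) ≠ 0 := mod_cast h₂
      rw [h₁, Nat.sub_eq_zero_of_le (by omega)]
      push_cast
      field_simp
      simp
    · have h₁' : ((f a).num.toNat : ℚ) ≠ 0 := mod_cast h₁
      rw [h₂, Nat.sub_eq_zero_of_le (by omega)]
      push_cast
      field_simp
      simp

theorem computable_rat_list_sum : Computable fun l : List ℚ => l.sum := by
  have hget : Computable fun p : List ℚ × ℕ => p.1[p.2]?.getD 0 :=
    (Primrec.option_getD.comp .list_getElem? (.const 0)).to_comp
  have hstep : Computable₂ fun (l : List ℚ) (p : ℕ × ℚ) => p.2 + l[p.1]?.getD 0 :=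
    computable_rat_add (by fun_prop)
      (hget.comp (f := fun p => p.1[p.2]?.getD 0) (g := fun q : List ℚ × ℕ × ℚ => (q.1, q.2.1))
        (by fun_prop))
  refine (Computable.nat_rec (f := fun l : List ℚ => l.length) (by fun_prop)
    (Computable.const 0) hstep).of_eq fun l => ?_
  suffices ∀ n, Nat.rec (motive := fun _ => ℚ) 0 (fun i s => s + l[i]?.getD 0) n =
      (l.take n).sum by simpa using this l.length
  intro n
  induction n with
  | zero => rfl
  | succ n ih =>
    rw [List.take_add_one, List.sum_append, ← ih]
    cases h : l[n]? <;> simp [h]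

end RationalArithmetic

section SemicomputableReals

variable {α β : Type*} [Primcodable α] [Primcodable β]

theorem rightComputable_iff_rePred {x : ℝ} : RightComputable x ↔ REPred fun q : ℚ => x < q := by
  constructor
  · rintro ⟨g, hg, hle, hlim⟩
    have hlt : REPred fun p : ℚ × ℕ => g p.2 < p.1 := rePred_rat_lt (by fun_prop) (by fun_prop)
    refine (rePred_exists hlt).of_eq fun q => ⟨fun ⟨n, hn⟩ => (hle n).trans_lt (mod_cast hn), ?_⟩
    intro hq
    obtain ⟨n, hn⟩ := (hlim.eventually_lt_const hq).exists
    exact ⟨n, mod_cast hn⟩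
  · intro hx
    obtain ⟨e, he, hxe⟩ := exists_computable_range_eq_of_rePred hx (exists_rat_gt x)
    have hbelow : REPred fun p : ℕ × ℚ => ∀ i ∈ List.range (p.1 + 1), p.2 < e i :=
      rePred_comp (rePred_forall_mem (P := fun p : ℚ × ℕ => p.1 < e p.2)
        (rePred_rat_lt (by fun_prop) (by fun_prop)))
        (f := fun p : ℕ × ℚ => (p.2, List.range (p.1 + 1)))
        (by fun_prop)
    have hexists (n : ℕ) : ∃ q : ℚ, x < q ∧ ∀ i ∈ List.range (n + 1), q < e i := by
      obtain ⟨q, hxq, hq⟩ := exists_rat_btwn <|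
        (Finset.lt_inf'_iff (f := fun i => (e i : ℝ)) (Finset.nonempty_range_add_one (n := n))).2
          fun i _ => (hxe _).2 ⟨i, rfl⟩
      exact ⟨q, hxq, fun i hi => mod_cast (Finset.lt_inf'_iff _).1 hq i (by simpa using hi)⟩
    obtain ⟨g, hg, hxg⟩ := exists_computable_of_rePred
      (rePred_and (rePred_comp (f := @Prod.snd ℕ ℚ) hx .snd) hbelow) hexists
    refine ⟨g, hg, fun n => (hxg n).1.le, tendsto_order.2 ⟨fun y hy => ?_, fun y hy => ?_⟩⟩
    · exact .of_forall fun n => hy.trans (hxg n).1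
    · obtain ⟨q, hxq, hqy⟩ := exists_rat_btwn hy
      obtain ⟨i, rfl⟩ := (hxe q).1 hxq
      filter_upwards [eventually_ge_atTop i] with n hn
      have hlt : g n < e i := (hxg n).2 i (by simpa using Nat.lt_succ_of_le hn)
      exact lt_trans (mod_cast hlt) hqy

theorem leftComputable_iff_rePred {x : ℝ} : LeftComputable x ↔ REPred fun q : ℚ => (q : ℝ) < x := by
  rw [LeftComputable, rightComputable_iff_rePred]
  constructor <;> intro h <;>
    exact (rePred_comp (f := fun q : ℚ => -q) h (by fun_prop)).of_eq fun q => by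
      push_cast; constructor <;> intro h <;> linarith

theorem ComputableReal.neg {x : ℝ} (hx : ComputableReal x) : ComputableReal (-x) := by
  obtain ⟨f, hf, hfx⟩ := hx
  refine ⟨fun n => -f n, by fun_prop, fun n hn => ?_⟩
  rw [← abs_neg]
  convert hfx n hn using 2
  push_cast
  ring

theorem ComputableReal.rightComputable {x : ℝ} (hx : ComputableReal x) : RightComputable x := by
  obtain ⟨f, hf, hfx⟩ := hx
  have happrox : Computable fun n : ℕ => f (n + 1) + ((1 : ℕ) : ℚ) / (n + 1 : ℕ) :=
    computable_rat_add (by fun_prop)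
      (computable_natCast_div (by fun_prop) (by fun_prop) fun n => n.succ_ne_zero)
  refine rightComputable_iff_rePred.2 <| (rePred_exists (P := fun p : ℚ × ℕ =>
      f (p.2 + 1) + ((1 : ℕ) : ℚ) / (p.2 + 1 : ℕ) < p.1)
    (rePred_rat_lt (happrox.comp .snd) .fst)).of_eq fun q => ⟨?_, fun hq => ?_⟩
  · rintro ⟨n, hn⟩
    have hn' := (Rat.cast_lt (K := ℝ)).2 hn
    have hfn := abs_lt.1 (hfx (n + 1) n.succ_pos)
    push_cast at hn' hfn
    linarith
  · obtain ⟨n, hn⟩ := exists_nat_one_div_lt (half_pos (sub_pos.2 hq))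
    have hfn := abs_lt.1 (hfx (n + 1) n.succ_pos)
    refine ⟨n, (Rat.cast_lt (K := ℝ)).1 ?_⟩
    push_cast at hfn ⊢
    linarith

theorem ComputableReal.leftComputable {x : ℝ} (hx : ComputableReal x) : LeftComputable x :=
  hx.neg.rightComputable

/-- A real-valued function is lower semicomputable if its strict rational hypograph is recursively
enumerable. -/
def LowerSemicomputable (f : α → ℝ) : Prop :=
  REPred fun p : α × ℚ => (p.2 : ℝ) < f p.1

/-- A real-valued function is upper semicomputable if its negative is lower semicomputable. -/
def UpperSemicomputable (f : α → ℝ) : Prop :=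
  LowerSemicomputable fun a => -f a

theorem upperSemicomputable_iff_rePred {f : α → ℝ} :
    UpperSemicomputable f ↔ REPred fun p : α × ℚ => f p.1 < p.2 := by
  constructor <;> intro h <;>
    exact (rePred_comp (f := fun p : α × ℚ => (p.1, -p.2)) h (by fun_prop)).of_eq fun q => by
      push_cast; constructor <;> intro h <;> linarith

theorem LowerSemicomputable.comp {f : β → ℝ} {g : α → β} (hf : LowerSemicomputable f)
    (hg : Computable g) : LowerSemicomputable fun a => f (g a) :=
  rePred_comp hf (f := fun p : α × ℚ => (g p.1, p.2)) (by fun_prop)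

theorem UpperSemicomputable.comp {f : β → ℝ} {g : α → β} (hf : UpperSemicomputable f)
    (hg : Computable g) : UpperSemicomputable fun a => f (g a) :=
  LowerSemicomputable.comp (f := fun b => -f b) hf hg

theorem lowerSemicomputable_ratCast {f : α → ℚ} (hf : Computable f) :
    LowerSemicomputable fun a => (f a : ℝ) :=
  (rePred_rat_lt (f := fun p : α × ℚ => p.2) (g := fun p => f p.1) (by fun_prop)
    (by fun_prop)).of_eq fun _ => Rat.cast_lt.symm

theorem LeftComputable.lowerSemicomputable_const {x : ℝ} (hx : LeftComputable x) :
    LowerSemicomputable fun _ : α => x :=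
  rePred_comp (leftComputable_iff_rePred.1 hx) Computable.snd

theorem RightComputable.upperSemicomputable_const {x : ℝ} (hx : RightComputable x) :
    UpperSemicomputable fun _ : α => x :=
  LeftComputable.lowerSemicomputable_const (by rwa [LeftComputable, neg_neg])

theorem rePred_lt_of_semicomputable {f g : α → ℝ} (hf : UpperSemicomputable f)
    (hg : LowerSemicomputable g) : REPred fun a => f a < g a :=
  (rePred_exists (rePred_and (upperSemicomputable_iff_rePred.1 hf) hg)).of_eq fun _ =>
    ⟨fun ⟨_, hfq, hqg⟩ => hfq.trans hqg, exists_rat_btwn⟩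

theorem lt_list_sum_map_iff_exists_rat {γ : Type*} (f : γ → ℝ) (L : List γ) (r : ℝ) :
    r < (L.map f).sum ↔ ∃ A : List (γ × ℚ), A.map Prod.fst = L ∧ (∀ z ∈ A, (z.2 : ℝ) < f z.1) ∧
      r < ((A.map Prod.snd).sum : ℚ) := by
  constructor
  · intro hr
    induction L generalizing r with
    | nil => exact ⟨[], rfl, by simp, by simpa using hr⟩
    | cons b L ih =>
      rw [List.map_cons, List.sum_cons, ← sub_lt_iff_lt_add] at hr
      obtain ⟨q, hrq, hqb⟩ := exists_rat_btwn hr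
      obtain ⟨A, rfl, hA, hrA⟩ := ih (r - q) (by linarith)
      refine ⟨(b, q) :: A, rfl, List.forall_mem_cons.2 ⟨hqb, hA⟩, ?_⟩
      push_cast [List.map_cons, List.sum_cons] at hrA ⊢
      linarith
  · rintro ⟨A, rfl, hA, hr⟩
    refine hr.trans_le ?_
    rw [Rat.cast_list_sum, List.map_map, List.map_map]
    exact List.sum_le_sum fun z hz => (hA z hz).le

theorem LowerSemicomputable.list_sum {f : α × β → ℝ} (hf : LowerSemicomputable f) :
    LowerSemicomputable fun p : α × List β => (p.2.map fun b => f (p.1, b)).sum := by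
  have hsum : REPred fun p : ((α × List β) × ℚ) × List (β × ℚ) => p.1.2 < (p.2.map Prod.snd).sum :=
    rePred_rat_lt (by fun_prop) (computable_rat_list_sum.comp (by fun_prop))
  have hbelow : REPred fun p : α × List (β × ℚ) => ∀ z ∈ p.2, (z.2 : ℝ) < f (p.1, z.1) :=
    rePred_forall_mem (P := fun p : α × β × ℚ => (p.2.2 : ℝ) < f (p.1, p.2.1))
      (rePred_comp hf (f := fun p : α × β × ℚ => ((p.1, p.2.1), p.2.2)) (by fun_prop))
  have hfst : REPred fun p : ((α × List β) × ℚ) × List (β × ℚ) => p.2.map Prod.fst = p.1.1.2 :=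
    rePred_eq (computable_list_map_fst .snd) (Computable.snd.comp (Computable.fst.comp .fst))
  refine (rePred_exists (rePred_and hfst (rePred_and (rePred_comp hbelow
    (f := fun p : ((α × List β) × ℚ) × List (β × ℚ) => (p.1.1.1, p.2)) (by fun_prop))
    hsum))).of_eq fun p => ?_
  rw [lt_list_sum_map_iff_exists_rat]
  norm_cast

theorem UpperSemicomputable.list_sum {f : α × β → ℝ} (hf : UpperSemicomputable f) :
    UpperSemicomputable fun p : α × List β => (p.2.map fun b => f (p.1, b)).sum := by
  have hneg (p : α × List β) : -(p.2.map fun b => f (p.1, b)).sum =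
      (p.2.map fun b => -f (p.1, b)).sum := by
    induction p.2 with
    | nil => simp
    | cons b L ih => rw [List.map_cons, List.map_cons, List.sum_cons, List.sum_cons, neg_add, ih]
  simpa only [UpperSemicomputable, hneg] using LowerSemicomputable.list_sum hf

end SemicomputableReals

section Weights

/-- The summand `l ^ Q * 2 ^ (-l / t)` of `W(Q, t)` contributed by a program of length `l`. -/
noncomputable def weight (Q t : ℝ) (l : ℕ) : ℝ :=
  (l : ℝ) ^ Q * 2 ^ (-(l : ℝ) / t)

theorem weight_nonneg (Q t : ℝ) (l : ℕ) : 0 ≤ weight Q t l := by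
  unfold weight
  positivity

theorem max_zero_eq_toNat_div_den (q : ℚ) : max q 0 = (q.num.toNat : ℚ) / q.den := by
  rcases le_total q 0 with hq | hq
  · rw [max_eq_right hq, Int.toNat_of_nonpos (Rat.num_nonpos.2 hq), Nat.cast_zero, zero_div]
  · rw [max_eq_left hq]
    conv_lhs => rw [rat_eq_toNat_sub_toNat_div_den q]
    simp [hq]

theorem computable_max_zero_pow {α : Type*} [Primcodable α] {f : α → ℚ} {g : α → ℕ}
    (hf : Computable f) (hg : Computable g) : Computable fun a => max (f a) 0 ^ g a :=
  (computable_natCast_div (a := fun a => (f a).num.toNat ^ g a) (c := fun a => (f a).den ^ g a)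
    (by fun_prop) (by fun_prop) fun a => pow_ne_zero _ (f a).den_nz).of_eq fun a => by
      rw [max_zero_eq_toNat_div_den, div_pow]
      push_cast
      rfl

theorem lt_iff_max_zero_pow_lt {r y : ℝ} {n : ℕ} (hy : 0 ≤ y) (hn : n ≠ 0) :
    r < y ↔ r < 0 ∨ max r 0 ^ n < y ^ n := by
  rcases lt_or_ge r 0 with hr | hr
  · simp [hr, hr.trans_le hy]
  · rw [max_eq_left hr, pow_lt_pow_iff_left₀ hr hy hn]
    simp [hr.not_gt]

theorem lt_iff_pow_lt_max_zero_pow {r y : ℝ} {n : ℕ} (hy : 0 ≤ y) (hn : n ≠ 0) :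
    y < r ↔ y ^ n < max r 0 ^ n := by
  rw [pow_lt_pow_iff_left₀ hy (le_max_right r 0) hn, lt_max_iff]
  simp [hy.not_gt]

theorem rpow_mul_two_rpow_pow_den_mul_den (l : ℕ) {q : ℚ} (hq : 0 < q) (x : ℚ) :
    ((l : ℝ) ^ (q : ℝ) * 2 ^ (x : ℝ)) ^ (q.den * x.den) =
      ((((l ^ (q.num.toNat * x.den) * 2 ^ (x.num.toNat * q.den) : ℕ) : ℚ) /
        (2 ^ ((-x.num).toNat * q.den) : ℕ) : ℚ) : ℝ) := by
  have hqden : (q.den : ℝ) ≠ 0 := mod_cast q.den_nz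
  have hxden : (x.den : ℝ) ≠ 0 := mod_cast x.den_nz
  have hqnum : (q : ℝ) * (q.den * x.den : ℕ) = (q.num.toNat * x.den : ℕ) := by
    have hq' : (q : ℝ) = q.num.toNat / q.den := by
      simpa only [Rat.cast_div, Rat.cast_natCast] using congrArg (Rat.cast (K := ℝ))
        ((max_eq_left hq.le).symm.trans (max_zero_eq_toNat_div_den q))
    rw [hq']
    push_cast
    field_simp
  have hxnum : (x : ℝ) * (q.den * x.den : ℕ) =
      (x.num.toNat * q.den : ℕ) - ((-x.num).toNat * q.den : ℕ) := by
    have hx' : (x : ℝ) = (x.num.toNat - (-x.num).toNat) / x.den :=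
      mod_cast congrArg (Rat.cast (K := ℝ)) (rat_eq_toNat_sub_toNat_div_den x)
    rw [hx']
    push_cast
    field_simp
  rw [mul_pow, ← Real.rpow_natCast, ← Real.rpow_natCast, ← Real.rpow_mul (by positivity),
    ← Real.rpow_mul (by positivity), hqnum, hxnum, Real.rpow_sub (by positivity),
    Real.rpow_natCast, Real.rpow_natCast, Real.rpow_natCast]
  push_cast
  ring

theorem computable_rpow_mul_two_rpow_pow_den_mul_den {α : Type*} [Primcodable α] {l : α → ℕ}
    {q x : α → ℚ} (hl : Computable l) (hq : Computable q) (hx : Computable x) :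
    Computable fun a => ((l a ^ ((q a).num.toNat * (x a).den) *
      2 ^ ((x a).num.toNat * (q a).den) : ℕ) : ℚ) / (2 ^ ((-(x a).num).toNat * (q a).den) : ℕ) :=
  computable_natCast_div (by fun_prop) (by fun_prop) fun a => by positivity

variable {α : Type*} [Primcodable α] {l : α → ℕ} {q x r : α → ℚ}

theorem rePred_lt_rpow_mul_two_rpow (hl : Computable l) (hq : Computable q) (hx : Computable x)
    (hr : Computable r) :
    REPred fun a => 0 < q a ∧ (r a : ℝ) < (l a : ℝ) ^ (q a : ℝ) * 2 ^ (x a : ℝ) := by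
  refine (rePred_and (rePred_rat_lt (Computable.const 0) hq) (rePred_or
    (rePred_rat_lt hr (Computable.const 0)) (rePred_rat_lt
      (computable_max_zero_pow hr (g := fun a => (q a).den * (x a).den) (by fun_prop))
      (computable_rpow_mul_two_rpow_pow_den_mul_den hl hq hx)))).of_eq fun a =>
        and_congr_right fun hq => ?_
  rw [lt_iff_max_zero_pow_lt (by positivity) (mul_ne_zero (q a).den_nz (x a).den_nz),
    rpow_mul_two_rpow_pow_den_mul_den _ hq]
  norm_cast

theorem rePred_rpow_mul_two_rpow_lt (hl : Computable l) (hq : Computable q) (hx : Computable x)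
    (hr : Computable r) :
    REPred fun a => 0 < q a ∧ (l a : ℝ) ^ (q a : ℝ) * 2 ^ (x a : ℝ) < r a := by
  refine (rePred_and (rePred_rat_lt (Computable.const 0) hq) (rePred_rat_lt
    (computable_rpow_mul_two_rpow_pow_den_mul_den hl hq hx)
    (computable_max_zero_pow hr (g := fun a => (q a).den * (x a).den) (by fun_prop)))).of_eq
      fun a => and_congr_right fun hq => ?_
  rw [lt_iff_pow_lt_max_zero_pow (by positivity) (mul_ne_zero (q a).den_nz (x a).den_nz),
    rpow_mul_two_rpow_pow_den_mul_den _ hq]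
  norm_cast

theorem natCast_rpow_le_natCast_rpow (l : ℕ) {y z : ℝ} (hy : 0 < y) (hyz : y ≤ z) :
    (l : ℝ) ^ y ≤ (l : ℝ) ^ z := by
  rcases Nat.eq_zero_or_pos l with rfl | hl
  · simp [Real.zero_rpow hy.ne', Real.zero_rpow (hy.trans_le hyz).ne']
  · exact Real.rpow_le_rpow_of_exponent_le (mod_cast hl) hyz

theorem lt_rpow_mul_two_rpow_iff_exists_rat {Q : ℝ} (hQ : 0 < Q) (l : ℕ) (x r : ℝ) :
    r < (l : ℝ) ^ Q * 2 ^ x ↔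
      ∃ q : ℚ, (q : ℝ) < Q ∧ 0 < q ∧ r < (l : ℝ) ^ (q : ℝ) * 2 ^ x := by
  constructor
  · intro hr
    have hcont : ContinuousAt (fun y : ℝ => (l : ℝ) ^ y * 2 ^ x) Q :=
      (Real.continuousAt_const_rpow' hQ.ne').mul continuousAt_const
    obtain ⟨z, hzQ, hz⟩ := exists_Ioc_subset_of_mem_nhds
      (Filter.inter_mem (hcont.eventually (lt_mem_nhds hr)) (Ioi_mem_nhds hQ)) ⟨0, hQ⟩
    obtain ⟨q, hzq, hqQ⟩ := exists_rat_btwn hzQ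
    have hq := hz ⟨hzq, hqQ.le⟩
    exact ⟨q, hqQ, (Rat.cast_pos (K := ℝ)).1 hq.2, hq.1⟩
  · rintro ⟨q, hqQ, hq, hr⟩
    refine hr.trans_le (mul_le_mul_of_nonneg_right ?_ (by positivity))
    exact natCast_rpow_le_natCast_rpow l (mod_cast hq) hqQ.le

theorem rpow_mul_two_rpow_lt_iff_exists_rat {Q : ℝ} (hQ : 0 < Q) (l : ℕ) (x r : ℝ) :
    (l : ℝ) ^ Q * 2 ^ x < r ↔
      ∃ q : ℚ, Q < q ∧ 0 < q ∧ (l : ℝ) ^ (q : ℝ) * 2 ^ x < r := by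
  constructor
  · intro hr
    have hcont : ContinuousAt (fun y : ℝ => (l : ℝ) ^ y * 2 ^ x) Q :=
      (Real.continuousAt_const_rpow' hQ.ne').mul continuousAt_const
    obtain ⟨z, hQz, hz⟩ := exists_Ico_subset_of_mem_nhds (hcont.eventually (gt_mem_nhds hr))
      ⟨Q + 1, lt_add_one Q⟩
    obtain ⟨q, hQq, hqz⟩ := exists_rat_btwn hQz
    exact ⟨q, hQq, mod_cast hQ.trans hQq, hz ⟨hQq.le, hqz⟩⟩
  · rintro ⟨q, hQq, -, hr⟩
    refine (mul_le_mul_of_nonneg_right ?_ (by positivity)).trans_lt hr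
    exact natCast_rpow_le_natCast_rpow l hQ hQq.le

theorem computable_neg_natCast_div {t : α → ℚ} (hl : Computable l) (ht : Computable t) :
    Computable fun a => -(l a : ℚ) / t a := by
  have hinv : Computable fun a => (t a)⁻¹ := computable_rat_inv ht
  refine computable_rat_of_eq_sub_div (a := fun a => l a * (-(t a)⁻¹.num).toNat)
    (b := fun a => l a * (t a)⁻¹.num.toNat) (c := fun a => (t a)⁻¹.den)
    (by fun_prop) (by fun_prop) (by fun_prop) (fun a => (t a)⁻¹.den_nz) fun a => ?_
  rw [div_eq_mul_inv]
  conv_lhs => rw [rat_eq_toNat_sub_toNat_div_den (t a)⁻¹]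
  push_cast
  ring

theorem lowerSemicomputable_weight {Q : ℝ} (hQ : 0 < Q) (hQleft : LeftComputable Q) :
    LowerSemicomputable fun p : ℚ × ℕ => weight Q p.1 p.2 := by
  refine (rePred_exists (rePred_and
    (rePred_comp (leftComputable_iff_rePred.1 hQleft) Computable.snd)
    (rePred_lt_rpow_mul_two_rpow (l := fun p : ((ℚ × ℕ) × ℚ) × ℚ => p.1.1.2)
      (x := fun p => -(p.1.1.2 : ℚ) / p.1.1.1) (by fun_prop) .snd
      (computable_neg_natCast_div (by fun_prop) (by fun_prop))
      (Computable.snd.comp .fst)))).of_eq fun p => ?_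
  change _ ↔ (p.2 : ℝ) < (p.1.2 : ℝ) ^ Q * 2 ^ (-(p.1.2 : ℝ) / p.1.1)
  rw [lt_rpow_mul_two_rpow_iff_exists_rat hQ]
  push_cast
  rfl

theorem upperSemicomputable_weight {Q : ℝ} (hQ : 0 < Q) (hQright : RightComputable Q) :
    UpperSemicomputable fun p : ℚ × ℕ => weight Q p.1 p.2 := by
  refine upperSemicomputable_iff_rePred.2 <| (rePred_exists (rePred_and
    (rePred_comp (rightComputable_iff_rePred.1 hQright) Computable.snd)
    (rePred_rpow_mul_two_rpow_lt (l := fun p : ((ℚ × ℕ) × ℚ) × ℚ => p.1.1.2)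
      (x := fun p => -(p.1.1.2 : ℚ) / p.1.1.1) (by fun_prop) .snd
      (computable_neg_natCast_div (by fun_prop) (by fun_prop))
      (Computable.snd.comp .fst)))).of_eq fun p => ?_
  change _ ↔ (p.1.2 : ℝ) ^ Q * 2 ^ (-(p.1.2 : ℝ) / p.1.1) < p.2
  rw [rpow_mul_two_rpow_lt_iff_exists_rat hQ]
  push_cast
  rfl

end Weights

section Complexity

variable {U : Computer}

theorem H_le {s p : List Bool} (h : s ∈ U.f p) : H U s ≤ p.length :=
  Nat.sInf_le ⟨p, rfl, h⟩

theorem IsOptimal.exists_program_of_rePred (hU : IsOptimal U) {R : List Bool × List Bool → Prop}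
    (hR : REPred R)
    (hfree : ∀ p q s t, R (p, s) → R (q, t) → p <+: q → p = q ∧ s = t) :
    ∃ d, ∀ p s, R (p, s) → ∃ p', p'.length ≤ p.length + d ∧ s ∈ U.f p' := by
  obtain ⟨φ, hφ, hφR, hdom⟩ := exists_partrec_of_rePred hR
  obtain ⟨d, hd⟩ := hU ⟨φ, hφ, fun p hp q hq hpq =>
    (hfree p q _ _ (hφR p _ (Part.get_mem hp)) (hφR q _ (Part.get_mem hq)) hpq).1⟩
  refine ⟨d, fun p s hs => ?_⟩
  obtain ⟨p', hlen, hp'⟩ := hd p (hdom p ⟨s, hs⟩)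
  have hmem := Part.get_mem (hdom p ⟨s, hs⟩)
  rw [(hfree p p _ _ (hφR p _ hmem) hs List.prefix_rfl).2] at hmem
  exact ⟨p', hlen, hp' s hmem⟩

theorem IsOptimal.exists_length_eq_H (hU : IsOptimal U) (s : List Bool) :
    ∃ p, p.length = H U s ∧ s ∈ U.f p := by
  obtain ⟨d, hd⟩ := hU.exists_program_of_rePred
    (R := fun p : List Bool × List Bool => p = ([], s))
    (rePred_eq Computable.id (Computable.const _)) (by rintro _ _ _ _ ⟨⟩ ⟨⟩ -; exact ⟨rfl, rfl⟩)
  obtain ⟨p, -, hp⟩ := hd _ _ rfl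
  exact Nat.sInf_mem (s := {n | ∃ p : List Bool, p.length = n ∧ s ∈ U.f p}) ⟨_, p, rfl, hp⟩

theorem IsOptimal.exists_H_le_H_add (hU : IsOptimal U) {ψ : List Bool →. List Bool}
    (hψ : Partrec ψ) : ∃ d, ∀ s, ∀ t ∈ ψ s, H U t ≤ H U s + d := by
  have hR : REPred fun q : List Bool × List Bool => q.2 ∈ (U.f q.1).bind ψ :=
    rePred_mem_partrec (U.partrec.bind (hψ.comp Computable.snd).to₂)
  obtain ⟨d, hd⟩ := hU.exists_program_of_rePred hR fun p q s t hs ht hpq => by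
    obtain ⟨x, hx, -⟩ := Part.mem_bind_iff.1 hs
    obtain ⟨y, hy, -⟩ := Part.mem_bind_iff.1 ht
    obtain rfl := U.prefixFree p (Part.dom_iff_mem.2 ⟨x, hx⟩) q (Part.dom_iff_mem.2 ⟨y, hy⟩) hpq
    exact ⟨rfl, Part.mem_unique hs ht⟩
  refine ⟨d, fun s t ht => ?_⟩
  obtain ⟨p, hp, hs⟩ := hU.exists_length_eq_H s
  obtain ⟨p', hp', ht'⟩ := hd p t (Part.mem_bind_iff.2 ⟨s, hs, ht⟩)
  exact hp ▸ (H_le ht').trans hp'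

theorem IsOptimal.exists_mem_domain_length_pos (hU : IsOptimal U) :
    ∃ p ∈ U.domain, 0 < p.length := by
  obtain ⟨p, -, hp⟩ := hU.exists_length_eq_H []
  obtain ⟨q, -, hq⟩ := hU.exists_length_eq_H [true]
  by_cases hnil : p = []
  · refine ⟨q, Part.dom_iff_mem.2 ⟨_, hq⟩, List.length_pos_iff.2 ?_⟩
    rintro rfl
    subst hnil
    exact absurd (Part.mem_unique hp hq) (by simp)
  · exact ⟨p, Part.dom_iff_mem.2 ⟨_, hp⟩, List.length_pos_iff.2 hnil⟩

theorem IsOptimal.length_pos (hU : IsOptimal U) {p : List Bool} (hp : p ∈ U.domain) :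
    0 < p.length := by
  obtain ⟨q, hq, hq0⟩ := hU.exists_mem_domain_length_pos
  refine List.length_pos_iff.2 ?_
  rintro rfl
  exact hq0.ne (congrArg List.length (U.prefixFree _ hp q hq List.nil_prefix))

theorem PrefixFree.uniquelyDecodable {S : Set (List Bool)} (hS : PrefixFree S) (hnil : [] ∉ S) :
    InformationTheory.UniquelyDecodable S := by
  have hne {a : List Bool} {L : List (List Bool)} (h : ∀ w ∈ a :: L, w ∈ S) :
      (a :: L).flatten ≠ [] := by
    intro hflat
    obtain rfl := List.flatten_eq_nil_iff.1 hflat a (by simp)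
    exact hnil (h _ (by simp))
  intro L₁
  induction L₁ with
  | nil =>
    rintro (_ | ⟨b, L₂⟩) - h₂ h
    · rfl
    · exact absurd h.symm (hne h₂)
  | cons a L₁ ih =>
    rintro (_ | ⟨b, L₂⟩) h₁ h₂ h
    · exact absurd h (hne h₁)
    · have ha := h₁ a (by simp)
      have hb := h₂ b (by simp)
      rw [List.flatten_cons, List.flatten_cons] at h
      obtain rfl : a = b := by
        rcases List.prefix_or_prefix_of_prefix (List.prefix_append a L₁.flatten)
          (h ▸ List.prefix_append b L₂.flatten) with hab | hba
        · exact hS a ha b hb hab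
        · exact (hS b hb a ha hba).symm
      rw [ih L₂ (fun w hw => h₁ w (by simp [hw])) (fun w hw => h₂ w (by simp [hw]))
        (List.append_cancel_left h)]

/-- The Kraft sum of a finite set of programs, that is, its contribution to the halting
probability. -/
noncomputable def kraftSum (S : Finset U.domain) : ℝ :=
  ∑ p ∈ S, (1 / 2) ^ (p : List Bool).length

theorem IsOptimal.kraftSum_le_one (hU : IsOptimal U) (S : Finset U.domain) : kraftSum S ≤ 1 := by
  have hfree : PrefixFree (S.map (Function.Embedding.subtype _) : Set (List Bool)) := by
    intro p hp q hq
    obtain ⟨p, -, rfl⟩ := Finset.mem_map.1 hp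
    obtain ⟨q, -, rfl⟩ := Finset.mem_map.1 hq
    exact U.prefixFree p p.2 q q.2
  have hnil : [] ∉ (S.map (Function.Embedding.subtype _) : Set (List Bool)) := by
    intro h
    obtain ⟨p, -, hp⟩ := Finset.mem_map.1 h
    exact (hU.length_pos p.2).ne' (congrArg List.length hp)
  simpa [kraftSum] using
    InformationTheory.kraft_mcmillan_inequality (hfree.uniquelyDecodable hnil)

end Complexity

section BinaryExpansion

/-- The natural number with the given binary digits, most significant digit first. -/
def binaryValue (s : List Bool) : ℕ :=
  s.foldl (fun k b => Nat.bit b k) 0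

theorem computable_binaryValue : Computable binaryValue := by
  refine Primrec.to_comp (Primrec.list_foldl .id (.const 0) (h := fun _ p => Nat.bit p.2 p.1) ?_)
  exact Primrec.cond (Primrec.snd.comp .snd)
    (Primrec.succ.comp (Primrec.nat_mul.comp (.const 2) (Primrec.fst.comp .snd)))
    (Primrec.nat_mul.comp (.const 2) (Primrec.fst.comp .snd))

theorem binaryValue_append_singleton (s : List Bool) (b : Bool) :
    binaryValue (s ++ [b]) = Nat.bit b (binaryValue s) := by
  simp [binaryValue]

theorem eq_of_length_eq_of_binaryValue_eq {s t : List Bool} (hlen : s.length = t.length)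
    (hval : binaryValue s = binaryValue t) : s = t := by
  induction s using List.reverseRecOn generalizing t with
  | nil => exact (List.length_eq_zero_iff.1 hlen.symm).symm
  | append_singleton s b ih =>
    obtain rfl | ⟨t, c, rfl⟩ := t.eq_nil_or_concat'
    · simp at hlen
    · rw [binaryValue_append_singleton, binaryValue_append_singleton] at hval
      obtain rfl : b = c := by simpa using congrArg Nat.bodd hval
      rw [ih (by simpa using hlen) (by simpa using congrArg Nat.div2 hval)]

theorem exists_length_eq_binaryValue_eq {m i : ℕ} (hi : i < 2 ^ m) :
    ∃ s, s.length = m ∧ binaryValue s = i := by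
  induction m generalizing i with
  | zero => exact ⟨[], rfl, by simpa [binaryValue, eq_comm] using hi⟩
  | succ m ih =>
    obtain ⟨s, hs, hsi⟩ := ih (i := i / 2) (by omega)
    refine ⟨s ++ [i.bodd], by simp [hs], ?_⟩
    rw [binaryValue_append_singleton, hsi, ← Nat.div2_val, Nat.bit_bodd_div2]

theorem exists_partrec_binaryValue : ∃ δ : ℕ × ℕ →. List Bool, Partrec δ ∧
    ∀ s : List Bool, s ∈ δ (s.length, binaryValue s) := by
  obtain ⟨δ, hδ, hδP, hdom⟩ := exists_partrec_of_rePred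
    (P := fun q : (ℕ × ℕ) × List Bool => q.2.length = q.1.1 ∧ binaryValue q.2 = q.1.2)
    (rePred_and (rePred_eq (by fun_prop) (by fun_prop))
      (rePred_eq (computable_binaryValue.comp .snd) (by fun_prop)))
  refine ⟨δ, hδ, fun s => ?_⟩
  have hs := Part.get_mem (hdom (s.length, binaryValue s) ⟨s, rfl, rfl⟩)
  obtain ⟨hlen, hval⟩ := hδP _ _ hs
  have heq : (δ (s.length, binaryValue s)).get _ = s := eq_of_length_eq_of_binaryValue_eq hlen hval
  rwa [heq] at hs

theorem length_bits (x : ℝ) (n : ℕ) : (bits x n).length = n := by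
  simp [bits]

theorem binaryValue_bits (x : ℝ) (n : ℕ) : binaryValue (bits x n) = ⌊Int.fract x * 2 ^ n⌋₊ := by
  induction n with
  | zero => simp [bits, binaryValue, Nat.floor_eq_zero.2 (Int.fract_lt_one x)]
  | succ n ih =>
    have hbits : bits x (n + 1) = bits x n ++ [binDigit x (n + 1)] := by
      simp [bits, List.range_succ]
    have hhalf : ⌊Int.fract x * 2 ^ n⌋₊ = ⌊Int.fract x * 2 ^ (n + 1)⌋₊ / 2 := by
      rw [← Nat.floor_div_ofNat, pow_succ, ← mul_assoc, mul_div_cancel_right₀ _ two_ne_zero]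
    have hdigit : binDigit x (n + 1) = ⌊Int.fract x * 2 ^ (n + 1)⌋₊.bodd := by
      rw [binDigit, ← Int.natCast_floor_eq_floor (by positivity)]
      have hmod := Nat.mod_two_of_bodd ⌊Int.fract x * 2 ^ (n + 1)⌋₊
      cases hodd : ⌊Int.fract x * 2 ^ (n + 1)⌋₊.bodd <;>
        simp only [hodd, Bool.toNat_true, Bool.toNat_false, decide_eq_true_eq,
          decide_eq_false_iff_not] at hmod ⊢ <;> omega
    rw [hbits, binaryValue_append_singleton, ih, hhalf, hdigit, ← Nat.div2_val, Nat.bit_bodd_div2]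

theorem binaryValue_bits_le_mul_two_pow {x : ℝ} (hx : 0 ≤ x) (hx1 : x < 1) (n : ℕ) :
    (binaryValue (bits x n) : ℝ) ≤ x * 2 ^ n := by
  rw [binaryValue_bits, Int.fract_eq_self.2 ⟨hx, hx1⟩]
  exact Nat.floor_le (by positivity)

theorem mul_two_pow_lt_binaryValue_bits_add_one {x : ℝ} (hx : 0 ≤ x) (hx1 : x < 1) (n : ℕ) :
    x * 2 ^ n < binaryValue (bits x n) + 1 := by
  rw [binaryValue_bits, Int.fract_eq_self.2 ⟨hx, hx1⟩]
  exact Nat.lt_floor_add_one _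

end BinaryExpansion

section Descriptions

theorem eq_and_isPrefix_of_replicate_true_append {a b : ℕ} {r s : List Bool}
    (h : List.replicate a true ++ false :: r <+: List.replicate b true ++ false :: s) :
    a = b ∧ r <+: s := by
  induction a generalizing b with
  | zero =>
    cases b with
    | zero => simpa using h
    | succ b => simp [List.replicate_succ] at h
  | succ a ih =>
    cases b with
    | zero => simp [List.replicate_succ] at h
    | succ b =>
      obtain ⟨rfl, hrs⟩ := ih (by simpa [List.replicate_succ] using h)
      exact ⟨rfl, hrs⟩

/-- A code for a triple of two natural numbers and a string which is prefix-free as soon as the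
numbers determine the length of the string. The first number is written as the two components of
`Nat.unpair` in unary, so that it only costs about twice its square root. -/
def tripleCode (z : ℕ × ℕ × List Bool) : List Bool :=
  List.replicate z.1.unpair.1 true ++ false :: (List.replicate z.1.unpair.2 true ++
    false :: (List.replicate z.2.1 true ++ false :: z.2.2))

theorem computable_tripleCode : Computable tripleCode := by
  have hreplicate : Primrec fun n => List.replicate n true :=
    (Primrec.list_map .list_range (Primrec.const true).to₂).of_eq fun n => by simp
  have happend {a : ℕ × ℕ × List Bool → ℕ} {s : ℕ × ℕ × List Bool → List Bool} (ha : Primrec a)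
      (hs : Primrec s) : Primrec fun z => List.replicate (a z) true ++ false :: s z :=
    Primrec.list_append.comp (hreplicate.comp ha) (Primrec.list_cons.comp (.const false) hs)
  have hunpair : Primrec fun z : ℕ × ℕ × List Bool => z.1.unpair := Primrec.unpair.comp .fst
  exact (happend (Primrec.fst.comp hunpair) <| happend (Primrec.snd.comp hunpair) <|
    happend (Primrec.fst.comp .snd) (Primrec.snd.comp .snd)).to_comp

theorem length_tripleCode_le (z : ℕ × ℕ × List Bool) :
    (tripleCode z).length ≤ 2 * z.1.sqrt + z.2.1 + z.2.2.length + 3 := by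
  have hunpair : z.1.unpair.1 ≤ z.1.sqrt ∧ z.1.unpair.2 ≤ z.1.sqrt := by
    have := Nat.sqrt_le_add z.1
    unfold Nat.unpair
    dsimp only
    split_ifs <;> constructor <;> dsimp only <;> omega
  simp only [tripleCode, List.length_append, List.length_replicate, List.length_cons]
  omega

theorem eq_of_tripleCode_isPrefix {m : ℕ → ℕ} {y z : ℕ × ℕ × List Bool}
    (hy : y.2.2.length = m y.1) (hz : z.2.2.length = m z.1) (h : tripleCode y <+: tripleCode z) :
    y = z := by
  obtain ⟨h₁, h⟩ := eq_and_isPrefix_of_replicate_true_append h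
  obtain ⟨h₂, h⟩ := eq_and_isPrefix_of_replicate_true_append h
  obtain ⟨h₃, h⟩ := eq_and_isPrefix_of_replicate_true_append h
  have hn : y.1 = z.1 := by rw [← Nat.pair_unpair y.1, h₁, h₂, Nat.pair_unpair]
  exact Prod.ext hn (Prod.ext h₃ (h.eq_of_length (by rw [hy, hz, hn])))

theorem IsOptimal.exists_H_le_of_partrec {U : Computer} (hU : IsOptimal U) {m : ℕ → ℕ}
    (hm : Computable m) {ψ : ℕ × ℕ × List Bool →. List Bool} (hψ : Partrec ψ) :
    ∃ d, ∀ n c x, x.length = m n → ∀ s ∈ ψ (n, c, x),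
      H U s ≤ 2 * n.sqrt + c + m n + d := by
  have hR : REPred fun q : List Bool × List Bool => ∃ z : ℕ × ℕ × List Bool,
      tripleCode z = q.1 ∧ z.2.2.length = m z.1 ∧ q.2 ∈ ψ z :=
    rePred_exists (P := fun q : (List Bool × List Bool) × ℕ × ℕ × List Bool =>
        tripleCode q.2 = q.1.1 ∧ q.2.2.2.length = m q.2.1 ∧ q.1.2 ∈ ψ q.2) <|
      rePred_and (rePred_eq (computable_tripleCode.comp .snd) (by fun_prop)) <|
        rePred_and (rePred_eq (by fun_prop) (by fun_prop)) <|
          rePred_comp (rePred_mem_partrec hψ)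
            (f := fun q : (List Bool × List Bool) × ℕ × ℕ × List Bool => (q.2, q.1.2))
            (by fun_prop)
  obtain ⟨d, hd⟩ := hU.exists_program_of_rePred hR (by
    rintro _ _ s t ⟨y, rfl, hy, hs⟩ ⟨z, rfl, hz, ht⟩ hyz
    obtain rfl := eq_of_tripleCode_isPrefix hy hz hyz
    exact ⟨rfl, Part.mem_unique hs ht⟩)
  refine ⟨d + 3, fun n c x hx s hs => ?_⟩
  obtain ⟨p', hlen, hp'⟩ := hd (tripleCode (n, c, x)) s ⟨(n, c, x), rfl, hx, hs⟩
  have hcode := length_tripleCode_le (n, c, x)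
  have hH := H_le hp'
  dsimp only at hcode
  rw [hx] at hcode
  omega

theorem IsOptimal.exists_H_bits_le {U : Computer} (hU : IsOptimal U) {x : ℝ} {m : ℕ → ℕ}
    (hm : Computable m) {P : (ℕ × List Bool) × ℕ → Prop} (hP : REPred P) (K : ℕ) :
    ∃ d, ∀ n y, y.length = m n → (∃ u, P ((n, y), u)) →
      (∀ u, P ((n, y), u) → u ≤ binaryValue (bits x n) + K ∧ binaryValue (bits x n) ≤ u + K) →
      H U (bits x n) ≤ 2 * n.sqrt + m n + d := by
  obtain ⟨φ, hφ, hφP, hdom⟩ := exists_partrec_of_rePred hP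
  obtain ⟨δ, hδ, hδbits⟩ := exists_partrec_binaryValue
  have hu : Partrec fun z : ℕ × ℕ × List Bool => φ (z.1, z.2.2) :=
    hφ.comp (Computable.fst.pair (Computable.snd.comp .snd))
  have hs : Partrec fun q : (ℕ × ℕ × List Bool) × ℕ => δ (q.1.1, q.2 + q.1.2.1 - K) :=
    hδ.comp (Computable.pair (Computable.fst.comp .fst) (computable_nat_sub (computable_nat_add
      .snd (Computable.fst.comp (Computable.snd.comp .fst))) (.const K)))
  obtain ⟨d, hd⟩ := hU.exists_H_le_of_partrec hm (hu.bind hs.to₂)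
  refine ⟨d + 2 * K, fun n y hy hex hall => ?_⟩
  have hmem := Part.get_mem (hdom (n, y) hex)
  obtain ⟨hu₁, hu₂⟩ := hall _ (hφP _ _ hmem)
  set u := (φ (n, y)).get (hdom (n, y) hex)
  have hbits : bits x n ∈ δ (n, u + (binaryValue (bits x n) + K - u) - K) := by
    have heq : (n, u + (binaryValue (bits x n) + K - u) - K) =
        ((bits x n).length, binaryValue (bits x n)) :=
      Prod.ext (length_bits x n).symm (by dsimp only; omega)
    exact heq ▸ hδbits (bits x n)
  have := hd n (binaryValue (bits x n) + K - u) y hy _ (Part.mem_bind_iff.2 ⟨u, hmem, hbits⟩)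
  omega

end Descriptions

section FiniteSubgraphs

variable {C U : Computer} {F : List (List Bool × List Bool)}

/-- `F` lists, without repeating a program, finitely many pairs of a program of `C` and its output.
Finite sets of programs have to be searched for in this form, since membership in `C.domain` is
only semidecidable. -/
def Computer.IsSubgraph (C : Computer) (F : List (List Bool × List Bool)) : Prop :=
  (F.map Prod.fst).Nodup ∧ ∀ z ∈ F, z.2 ∈ C.f z.1

open Classical in
/-- The programs occurring in a list of pairs of a program and its output. -/
noncomputable def Computer.programs (C : Computer) (F : List (List Bool × List Bool)) :
    Finset C.domain :=
  (F.map Prod.fst).toFinset.subtype (· ∈ C.domain)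

theorem nodup_iff_map_idxOf_eq_range {α : Type*} [DecidableEq α] {L : List α} :
    L.Nodup ↔ L.map L.idxOf = List.range L.length := by
  constructor
  · intro hL
    refine List.ext_getElem (by simp) fun i _ _ => ?_
    simp [hL.idxOf_getElem]
  · intro hL
    exact List.Nodup.of_map L.idxOf (hL ▸ List.nodup_range)

theorem Computer.rePred_isSubgraph (C : Computer) : REPred C.IsSubgraph := by
  have hidxOf : Computable fun F : List (List Bool × List Bool) =>
      (F.map Prod.fst).map fun p => @List.idxOf _ instBEqOfDecidableEq p (F.map Prod.fst) :=
    Primrec.to_comp <| Primrec.list_map (Primrec.list_map .id (Primrec.fst.comp .snd).to₂)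
      (Primrec.list_idxOf.comp .snd (Primrec.list_map .fst (Primrec.fst.comp .snd).to₂)).to₂
  have hmem : REPred fun F : List (List Bool × List Bool) => ∀ z ∈ F, z.2 ∈ C.f z.1 :=
    rePred_comp (rePred_forall_mem (P := fun p : Unit × List Bool × List Bool =>
      p.2.2 ∈ C.f p.2.1) (rePred_comp (rePred_mem_partrec C.partrec) .snd))
      (f := fun F : List (List Bool × List Bool) => ((), F)) (by fun_prop)
  exact (rePred_and (rePred_eq hidxOf
    (computable_list_range (computable_list_length (computable_list_map_fst .id)))) hmem).of_eq
      fun F => and_congr_left' nodup_iff_map_idxOf_eq_range.symm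

theorem Computer.mem_programs {p : C.domain} :
    p ∈ C.programs F ↔ (p : List Bool) ∈ F.map Prod.fst := by
  simp [Computer.programs]

theorem Computer.IsSubgraph.sum_map_fst (hF : C.IsSubgraph F) (f : List Bool → ℝ) :
    (F.map fun z => f z.1).sum = ∑ p ∈ C.programs F, f p := by
  classical
  have hdomain : ∀ p ∈ (F.map Prod.fst).toFinset, p ∈ C.domain := by
    intro p hp
    obtain ⟨z, hz, rfl⟩ := List.mem_map.1 (List.mem_toFinset.1 hp)
    exact Part.dom_iff_mem.2 ⟨z.2, hF.2 z hz⟩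
  rw [Computer.programs, Finset.sum_subtype_of_mem f hdomain, List.sum_toFinset f hF.1,
    List.map_map]
  rfl

theorem Computer.exists_isSubgraph_programs_eq (C : Computer) (S : Finset C.domain) :
    ∃ F, C.IsSubgraph F ∧ C.programs F = S := by
  have hfst : (S.toList.map fun p : C.domain => ((p : List Bool), (C.f p).get p.2)).map Prod.fst =
      S.toList.map Subtype.val := by
    rw [List.map_map]
    rfl
  refine ⟨S.toList.map fun p : C.domain => ((p : List Bool), (C.f p).get p.2),
    ⟨?_, fun z hz => ?_⟩, ?_⟩
  · rw [hfst]
    exact S.nodup_toList.map Subtype.val_injective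
  · obtain ⟨p, -, rfl⟩ := List.mem_map.1 hz
    exact Part.get_mem _
  · ext p
    rw [Computer.mem_programs, hfst]
    simp

/-- The partial sum of `W(Q, t)` over the programs listed in `F`. -/
noncomputable def listWeight (Q t : ℝ) (F : List (List Bool × List Bool)) : ℝ :=
  (F.map fun z => weight Q t z.1.length).sum

theorem Computer.IsSubgraph.listWeight_eq (hF : U.IsSubgraph F) (Q t : ℝ) :
    listWeight Q t F = ∑ p ∈ U.programs F, wterm U Q t p :=
  hF.sum_map_fst fun p => weight Q t p.length

theorem lowerSemicomputable_listWeight {Q : ℝ} (hQ : 0 < Q) (hQleft : LeftComputable Q) :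
    LowerSemicomputable fun p : ℚ × List (List Bool × List Bool) => listWeight Q p.1 p.2 :=
  LowerSemicomputable.list_sum (f := fun p : ℚ × List Bool × List Bool =>
    weight Q p.1 p.2.1.length) <|
      (lowerSemicomputable_weight hQ hQleft).comp
        (g := fun p : ℚ × List Bool × List Bool => (p.1, p.2.1.length)) (by fun_prop)

theorem upperSemicomputable_listWeight {Q : ℝ} (hQ : 0 < Q) (hQright : RightComputable Q) :
    UpperSemicomputable fun p : ℚ × List (List Bool × List Bool) => listWeight Q p.1 p.2 :=
  UpperSemicomputable.list_sum (f := fun p : ℚ × List Bool × List Bool =>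
    weight Q p.1 p.2.1.length) <|
      (upperSemicomputable_weight hQ hQright).comp
        (g := fun p : ℚ × List Bool × List Bool => (p.1, p.2.1.length)) (by fun_prop)

end FiniteSubgraphs

section WeightEstimates

variable {Q s t : ℝ} {l : ℕ}

/-- Convexity of `2 ^ x`, applied between the exponents `-l / s` and `-l / t`. -/
theorem weight_mul_log_two_mul_le_weight_sub (Q s t : ℝ) (l : ℕ) :
    weight Q s l * (Real.log 2 * (l / s - l / t)) ≤ weight Q t l - weight Q s l := by
  have hexp : (2 : ℝ) ^ (-(l : ℝ) / t) =
      2 ^ (-(l : ℝ) / s) * Real.exp (Real.log 2 * (l / s - l / t)) := by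
    rw [← Real.rpow_def_of_pos two_pos, ← Real.rpow_add two_pos]
    congr 1
    ring
  have htangent := Real.add_one_le_exp (Real.log 2 * (l / s - l / t))
  calc weight Q s l * (Real.log 2 * (l / s - l / t))
      ≤ weight Q s l * (Real.exp (Real.log 2 * (l / s - l / t)) - 1) :=
        mul_le_mul_of_nonneg_left (by linarith) (weight_nonneg Q s l)
    _ = weight Q t l - weight Q s l := by
        simp only [weight, hexp]
        ring

theorem weight_le_weight (hs : 0 < s) (hst : s ≤ t) : weight Q s l ≤ weight Q t l := by
  have hdiv : (l : ℝ) / t ≤ l / s := div_le_div_of_nonneg_left (by positivity) hs hst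
  have hgap := mul_nonneg (weight_nonneg Q s l)
    (mul_nonneg (Real.log_pos one_lt_two).le (sub_nonneg.2 hdiv))
  linarith [weight_mul_log_two_mul_le_weight_sub Q s t l]

theorem weight_mul_natCast (hQ : Q + 1 ≠ 0) : weight Q t l * l = weight (Q + 1) t l := by
  rw [weight, weight, Real.rpow_add_one' (Nat.cast_nonneg l) hQ]
  ring

theorem weight_sub_le (hQ : 0 < Q) (hs : 0 < s) (hst : s ≤ t) :
    weight Q t l - weight Q s l ≤ weight (Q + 1) t l * (Real.log 2 / s ^ 2 * (t - s)) := by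
  have hdiv : (l : ℝ) / s - l / t ≤ l * ((t - s) / s ^ 2) := by
    have ht : 0 < t := hs.trans_le hst
    rw [div_sub_div _ _ hs.ne' ht.ne', ← mul_div_assoc, mul_comm (s : ℝ) l, ← mul_sub, sq]
    exact div_le_div_of_nonneg_left (mul_nonneg (by positivity) (sub_nonneg.2 hst))
      (by positivity) (by gcongr)
  calc weight Q t l - weight Q s l
      ≤ weight Q t l * (Real.log 2 * (l / s - l / t)) := by
        linarith [weight_mul_log_two_mul_le_weight_sub Q t s l]
    _ ≤ weight Q t l * (Real.log 2 * (l * ((t - s) / s ^ 2))) := by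
        have := weight_nonneg Q t l
        have := Real.log_pos one_lt_two
        gcongr
    _ = weight (Q + 1) t l * (Real.log 2 / s ^ 2 * (t - s)) := by
        rw [← weight_mul_natCast (by positivity)]
        ring

theorem weight_mul_log_two_mul_natCast_mul_sub_le (hs : 0 < s) (hst : s ≤ t) (ht : t ≤ 1) :
    weight Q s l * (Real.log 2 * l) * (t - s) ≤ weight Q t l - weight Q s l := by
  have hdiv : l * (t - s) ≤ (l : ℝ) / s - l / t := by
    have ht0 : 0 < t := hs.trans_le hst
    rw [div_sub_div _ _ hs.ne' ht0.ne', mul_comm (s : ℝ) l, ← mul_sub]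
    exact le_div_self (mul_nonneg (by positivity) (sub_nonneg.2 hst)) (by positivity)
      (mul_le_one₀ (hst.trans ht) ht0.le ht)
  calc weight Q s l * (Real.log 2 * l) * (t - s)
      = weight Q s l * (Real.log 2 * (l * (t - s))) := by ring
    _ ≤ weight Q s l * (Real.log 2 * (l / s - l / t)) := by
        have := weight_nonneg Q s l
        have := Real.log_pos one_lt_two
        gcongr
    _ ≤ weight Q t l - weight Q s l := weight_mul_log_two_mul_le_weight_sub Q s t l

theorem weight_pos (hl : 0 < l) : 0 < weight Q t l := by
  unfold weight
  positivity

theorem weight_lt_weight (hs : 0 < s) (hst : s < t) (hl : 0 < l) :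
    weight Q s l < weight Q t l := by
  have hl' : (0 : ℝ) < l := mod_cast hl
  have hdiv : (l : ℝ) / t < l / s := div_lt_div_of_pos_left hl' hs hst
  have hgap := mul_pos (weight_pos (Q := Q) (t := s) hl)
    (mul_pos (Real.log_pos one_lt_two) (sub_pos.2 hdiv))
  linarith [weight_mul_log_two_mul_le_weight_sub Q s t l]

theorem exists_weight_le (Q : ℝ) (hs : 0 < s) (hst : s < t) :
    ∃ C, 0 < C ∧ ∀ l, weight Q s l ≤ C * 2 ^ (-(l : ℝ) / t) := by
  have hb : 0 < Real.log 2 * (1 / s - 1 / t) :=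
    mul_pos (Real.log_pos one_lt_two) (sub_pos.2 (one_div_lt_one_div_of_lt hs hst))
  obtain ⟨C, hC⟩ := ((tendsto_rpow_mul_exp_neg_mul_atTop_nhds_zero Q _ hb).comp
    tendsto_natCast_atTop_atTop).bddAbove_range
  refine ⟨max C 1, by positivity, fun l => ?_⟩
  have hsplit : weight Q s l = (l : ℝ) ^ Q *
      Real.exp (-(Real.log 2 * (1 / s - 1 / t)) * l) * 2 ^ (-(l : ℝ) / t) := by
    rw [weight, mul_assoc, Real.rpow_def_of_pos two_pos, Real.rpow_def_of_pos two_pos,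
      ← Real.exp_add]
    congr 2
    ring
  rw [hsplit]
  exact mul_le_mul_of_nonneg_right ((hC ⟨l, rfl⟩).trans (le_max_left C 1)) (by positivity)

end WeightEstimates

section PartialSums

variable {U : Computer} {Q T t : ℝ}

theorem two_rpow_neg_natCast (l : ℕ) : (2 : ℝ) ^ (-(l : ℝ)) = (1 / 2) ^ l := by
  rw [Real.rpow_neg two_pos.le, Real.rpow_natCast, one_div, inv_pow]

theorem IsOptimal.summable_wterm (hU : IsOptimal U) (Q : ℝ) (ht : 0 < t) (ht1 : t < 1) :
    Summable (wterm U Q t) := by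
  obtain ⟨C, hC, hle⟩ := exists_weight_le Q ht ht1
  refine summable_of_sum_le (c := C) (fun p => weight_nonneg Q t _) fun S => ?_
  calc ∑ p ∈ S, wterm U Q t p
      ≤ ∑ p ∈ S, C * (1 / 2 : ℝ) ^ (p : List Bool).length := Finset.sum_le_sum fun p _ => by
        have := hle (p : List Bool).length
        rwa [div_one, two_rpow_neg_natCast] at this
    _ ≤ C := by
        rw [← Finset.mul_sum]
        exact mul_le_of_le_one_right hC.le (hU.kraftSum_le_one S)

theorem IsOptimal.sum_wterm_le_tsum (hU : IsOptimal U) (Q : ℝ) (ht : 0 < t) (ht1 : t < 1)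
    (S : Finset U.domain) : ∑ p ∈ S, wterm U Q t p ≤ ∑' p, wterm U Q t p :=
  (hU.summable_wterm Q ht ht1).sum_le_tsum S fun _ _ => weight_nonneg Q t _

theorem sum_wterm_le_sum_wterm (hT : 0 < T) (hTt : T ≤ t) (S : Finset U.domain) :
    ∑ p ∈ S, wterm U Q T p ≤ ∑ p ∈ S, wterm U Q t p :=
  Finset.sum_le_sum fun _ _ => weight_le_weight hT hTt

theorem IsOptimal.exists_sum_wterm_le_add (hU : IsOptimal U) (hQ : 0 < Q) (hT : 0 < T)
    {t₁ : ℝ} (hTt₁ : T ≤ t₁) (ht₁ : t₁ < 1) :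
    ∃ C, 0 ≤ C ∧ ∀ t, T ≤ t → t ≤ t₁ → ∀ S : Finset U.domain,
      ∑ p ∈ S, wterm U Q t p ≤ ∑ p ∈ S, wterm U Q T p + C * (t - T) := by
  have hsum : 0 ≤ ∑' p, wterm U (Q + 1) t₁ p := tsum_nonneg fun p => weight_nonneg (Q + 1) t₁ _
  refine ⟨(∑' p, wterm U (Q + 1) t₁ p) * (Real.log 2 / T ^ 2), by positivity,
    fun t hTt htt₁ S => ?_⟩
  have := sub_nonneg.2 hTt
  rw [← sub_le_iff_le_add', ← Finset.sum_sub_distrib]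
  calc ∑ p ∈ S, (wterm U Q t p - wterm U Q T p)
      ≤ ∑ p ∈ S, wterm U (Q + 1) t₁ p * (Real.log 2 / T ^ 2 * (t - T)) :=
        Finset.sum_le_sum fun p _ => (weight_sub_le hQ hT hTt).trans <|
          mul_le_mul_of_nonneg_right (weight_le_weight (hT.trans_le hTt) htt₁) (by positivity)
    _ ≤ (∑' p, wterm U (Q + 1) t₁ p) * (Real.log 2 / T ^ 2 * (t - T)) := by
        rw [← Finset.sum_mul]
        exact mul_le_mul_of_nonneg_right
          (hU.sum_wterm_le_tsum (Q + 1) (hT.trans_le hTt₁) ht₁ S) (by positivity)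
    _ = (∑' p, wterm U (Q + 1) t₁ p) * (Real.log 2 / T ^ 2) * (t - T) := by ring

theorem sum_wterm_add_le_sum_wterm (hT : 0 < T) (hTt : T ≤ t) (ht : t ≤ 1) {S : Finset U.domain}
    {p₀ : U.domain} (hp₀ : p₀ ∈ S) :
    ∑ p ∈ S, wterm U Q T p + wterm U Q T p₀ * (Real.log 2 * (p₀ : List Bool).length) * (t - T) ≤
      ∑ p ∈ S, wterm U Q t p := by
  rw [← le_sub_iff_add_le', ← Finset.sum_sub_distrib]
  exact (weight_mul_log_two_mul_natCast_mul_sub_le hT hTt ht).trans <|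
    Finset.single_le_sum (f := fun p => wterm U Q t p - wterm U Q T p)
      (fun p _ => sub_nonneg.2 (weight_le_weight hT hTt)) hp₀

theorem IsOptimal.sum_wterm_lt_sum_wterm (hU : IsOptimal U) (hT : 0 < T) (hTt : T < t)
    {S : Finset U.domain} (hS : S.Nonempty) :
    ∑ p ∈ S, wterm U Q T p < ∑ p ∈ S, wterm U Q t p :=
  Finset.sum_lt_sum_of_nonempty hS fun p _ => weight_lt_weight hT hTt (hU.length_pos p.2)

theorem IsOptimal.lt_iff_exists_tsum_lt_sum (hU : IsOptimal U) (Q : ℝ) (hT : 0 < T) (hT1 : T < 1)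
    (ht : 0 < t) :
    T < t ↔ ∃ S : Finset U.domain, ∑' p, wterm U Q T p < ∑ p ∈ S, wterm U Q t p := by
  constructor
  · intro hTt
    obtain ⟨p₀, hp₀, hlen⟩ := hU.exists_mem_domain_length_pos
    have hgap : 0 < wterm U Q t ⟨p₀, hp₀⟩ - wterm U Q T ⟨p₀, hp₀⟩ :=
      sub_pos.2 (weight_lt_weight hT hTt hlen)
    obtain ⟨S, hS, hmem⟩ := (((hU.summable_wterm Q hT hT1).hasSum.eventually
      (lt_mem_nhds (sub_lt_self _ hgap))).and (eventually_ge_atTop {⟨p₀, hp₀⟩})).exists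
    refine ⟨S, ?_⟩
    have hsingle := Finset.single_le_sum (f := fun p => wterm U Q t p - wterm U Q T p)
      (fun p _ => sub_nonneg.2 (weight_le_weight hT hTt.le)) (Finset.singleton_subset_iff.1 hmem)
    rw [Finset.sum_sub_distrib] at hsingle
    linarith
  · rintro ⟨S, hS⟩
    by_contra! htT
    exact hS.not_ge ((sum_wterm_le_sum_wterm ht htT S).trans (hU.sum_wterm_le_tsum Q hT hT1 S))

end PartialSums

section RightComputability

variable {U : Computer} {Q T : ℝ}

theorem rePred_lt_listWeight (hQ : 0 < Q) (hQleft : LeftComputable Q) {w : ℝ}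
    (hw : RightComputable w) :
    REPred fun p : ℚ × List (List Bool × List Bool) => w < listWeight Q p.1 p.2 :=
  rePred_lt_of_semicomputable hw.upperSemicomputable_const
    (lowerSemicomputable_listWeight hQ hQleft)

theorem rePred_listWeight_lt (hQ : 0 < Q) (hQright : RightComputable Q) {w : ℝ}
    (hw : LeftComputable w) :
    REPred fun p : ℚ × List (List Bool × List Bool) => listWeight Q p.1 p.2 < w :=
  rePred_lt_of_semicomputable (upperSemicomputable_listWeight hQ hQright)
    hw.lowerSemicomputable_const

theorem IsOptimal.lt_iff_exists_tsum_lt_listWeight (hU : IsOptimal U) (Q : ℝ) (hT : 0 < T)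
    (hT1 : T < 1) {t : ℝ} (ht : 0 < t) :
    T < t ↔ ∃ F, U.IsSubgraph F ∧ ∑' p, wterm U Q T p < listWeight Q t F := by
  rw [hU.lt_iff_exists_tsum_lt_sum Q hT hT1 ht]
  constructor
  · rintro ⟨S, hS⟩
    obtain ⟨F, hF, rfl⟩ := U.exists_isSubgraph_programs_eq S
    exact ⟨F, hF, hF.listWeight_eq Q t ▸ hS⟩
  · rintro ⟨F, hF, hlt⟩
    exact ⟨U.programs F, hF.listWeight_eq Q t ▸ hlt⟩

theorem IsOptimal.rightComputable_of_rightComputable_tsum (hU : IsOptimal U) (hQ : 0 < Q)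
    (hQleft : LeftComputable Q) (hT : 0 < T) (hT1 : T < 1)
    (hW : RightComputable (∑' p, wterm U Q T p)) : RightComputable T := by
  have hsearch : REPred fun z : ℚ × List (List Bool × List Bool) =>
      0 < z.1 ∧ U.IsSubgraph z.2 ∧ ∑' p, wterm U Q T p < listWeight Q z.1 z.2 :=
    rePred_and (rePred_rat_lt (Computable.const 0) .fst) <|
      rePred_and (rePred_comp U.rePred_isSubgraph .snd) (rePred_lt_listWeight hQ hQleft hW)
  refine rightComputable_iff_rePred.2 ((rePred_exists hsearch).of_eq fun q => ?_)
  constructor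
  · rintro ⟨F, hq, hF⟩
    exact (hU.lt_iff_exists_tsum_lt_listWeight Q hT hT1 (Rat.cast_pos.2 hq)).2 ⟨F, hF⟩
  · intro hTq
    obtain ⟨F, hF⟩ :=
      (hU.lt_iff_exists_tsum_lt_listWeight Q hT hT1 (hT.trans hTq)).1 hTq
    exact ⟨F, (Rat.cast_pos (K := ℝ)).1 (hT.trans hTq), hF⟩

end RightComputability

section Randomness

variable {U : Computer} {Q T : ℝ}

/-- A string that differs from every output listed in `F`, being longer than each of them. -/
def freshString (F : List (List Bool × List Bool)) : List Bool :=
  (F.map Prod.snd).flatten ++ [true]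

theorem computable_freshString : Computable freshString :=
  computable_list_append (Primrec.list_flatten.to_comp.comp (computable_list_map_snd .id))
    (Computable.const [true])

theorem Computer.IsSubgraph.notMem_programs_of_freshString_mem
    {F : List (List Bool × List Bool)} (hF : U.IsSubgraph F) {p : U.domain}
    (hp : freshString F ∈ U.f p) : p ∉ U.programs F := by
  rw [Computer.mem_programs]
  intro hmem
  obtain ⟨z, hz, hzp⟩ := List.mem_map.1 hmem
  have hout : freshString F = z.2 := Part.mem_unique hp (hzp ▸ hF.2 z hz)
  have hlen := (List.sublist_flatten_of_mem (List.mem_map_of_mem (f := Prod.snd) hz)).length_le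
  rw [← hout, freshString, List.length_append, List.length_singleton] at hlen
  omega

theorem IsOptimal.exists_H_freshString_le (hU : IsOptimal U) (hQ : 0 < Q)
    (hQleft : LeftComputable Q) (hT : 0 < T) (hT1 : T < 1)
    (hW : RightComputable (∑' p, wterm U Q T p)) :
    ∃ d, ∀ n, ∃ F, U.IsSubgraph F ∧
      ∑' p, wterm U Q T p < listWeight Q ((binaryValue (bits T n) + 1) / 2 ^ n) F ∧
      H U (freshString F) ≤ H U (bits T n) + d := by
  have hupper : Computable fun s : List Bool =>
      ((binaryValue s + 1 : ℕ) : ℚ) / (2 ^ s.length : ℕ) :=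
    computable_natCast_div (computable_nat_add computable_binaryValue (.const 1)) (by fun_prop)
      fun s => by positivity
  obtain ⟨φ, hφ, hφP, hdom⟩ := exists_partrec_of_rePred <|
    rePred_and (rePred_comp U.rePred_isSubgraph Computable.snd) <|
      rePred_comp (rePred_lt_listWeight hQ hQleft hW)
        (f := fun z : List Bool × List (List Bool × List Bool) =>
          (((binaryValue z.1 + 1 : ℕ) : ℚ) / (2 ^ z.1.length : ℕ), z.2))
        ((hupper.comp .fst).pair .snd)
  obtain ⟨d, hd⟩ := hU.exists_H_le_H_add (hφ.map (computable_freshString.comp .snd).to₂)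
  refine ⟨d, fun n => ?_⟩
  have hlt : T < (binaryValue (bits T n) + 1) / 2 ^ n :=
    (lt_div_iff₀ (by positivity)).2 (mul_two_pow_lt_binaryValue_bits_add_one hT.le hT1 n)
  have hex := (hU.lt_iff_exists_tsum_lt_listWeight Q hT hT1 (by positivity)).1 hlt
  have hmem := Part.get_mem (hdom (bits T n) (by simpa [length_bits] using hex))
  obtain ⟨hF, hF'⟩ := hφP _ _ hmem
  exact ⟨_, hF, by simpa [length_bits] using hF', hd _ _ (Part.mem_map _ hmem)⟩

theorem IsOptimal.exists_eventually_exists_weight_le (hU : IsOptimal U) (hQ : 0 < Q)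
    (hQleft : LeftComputable Q) (hT : 0 < T) (hT1 : T < 1)
    (hW : RightComputable (∑' p, wterm U Q T p)) :
    ∃ C d, 0 ≤ C ∧ ∀ᶠ n in atTop, ∃ l, 0 < l ∧ l ≤ H U (bits T n) + d ∧
      weight Q T l ≤ C * (1 / 2) ^ n := by
  obtain ⟨d, hd⟩ := hU.exists_H_freshString_le hQ hQleft hT hT1 hW
  obtain ⟨t₁, hTt₁, ht₁⟩ := exists_between hT1
  obtain ⟨C, hC, hlip⟩ := hU.exists_sum_wterm_le_add hQ hT hTt₁.le ht₁
  have hsmall : ∀ᶠ n : ℕ in atTop, (1 / 2 : ℝ) ^ n < t₁ - T :=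
    (tendsto_pow_atTop_nhds_zero_of_lt_one (by norm_num) (by norm_num)).eventually_lt_const
      (sub_pos.2 hTt₁)
  refine ⟨C, d, hC, hsmall.mono fun n hn => ?_⟩
  obtain ⟨F, hF, hlt, hH⟩ := hd n
  obtain ⟨p, hlen, hp⟩ := hU.exists_length_eq_H (freshString F)
  lift p to U.domain using Part.dom_iff_mem.2 ⟨_, hp⟩
  refine ⟨_, hU.length_pos p.2, hlen.trans_le hH, ?_⟩
  set t := ((binaryValue (bits T n) : ℝ) + 1) / 2 ^ n with ht
  have htT : T < t :=
    (lt_div_iff₀ (by positivity)).2 (mul_two_pow_lt_binaryValue_bits_add_one hT.le hT1 n)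
  have htn : t ≤ T + (1 / 2) ^ n := by
    have := binaryValue_bits_le_mul_two_pow hT.le hT1 n
    rw [ht, add_div, one_div_pow]
    gcongr
    rwa [div_le_iff₀ (by positivity)]
  have hfresh := hU.sum_wterm_le_tsum Q hT hT1 (Finset.cons p (U.programs F)
    (hF.notMem_programs_of_freshString_mem hp))
  rw [Finset.sum_cons] at hfresh
  rw [hF.listWeight_eq] at hlt
  calc wterm U Q T p ≤ C * (t - T) := by
        have := hlip t htT.le (by linarith) (U.programs F)
        linarith
    _ ≤ C * (1 / 2) ^ n := mul_le_mul_of_nonneg_left (by linarith) hC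

theorem tendsto_sub_mul_atTop_of_weight_le (hQ : 0 < Q) (hT : 0 < T) {C : ℝ} {l : ℕ → ℕ}
    (hl : ∀ᶠ n in atTop, 0 < l n)
    (hle : ∀ᶠ n in atTop, weight Q T (l n) ≤ C * (1 / 2) ^ n) :
    Tendsto (fun n => (l n : ℝ) - T * n) atTop atTop := by
  have hlogb : ∀ᶠ n in atTop,
      T * Q * Real.logb 2 (l n) - T * Real.logb 2 C ≤ l n - T * n := by
    filter_upwards [hl, hle] with n hn hwn
    have hlpos : (0 : ℝ) < l n := mod_cast hn
    have hC : 0 < C := pos_of_mul_pos_left ((weight_pos hn).trans_le hwn) (by positivity)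
    have hlog := Real.logb_le_logb_of_le one_lt_two (weight_pos hn) hwn
    rw [weight, Real.logb_mul (by positivity) (by positivity), Real.logb_rpow_eq_mul_logb_of_pos
      hlpos, Real.logb_rpow two_pos (by norm_num), Real.logb_mul hC.ne' (by positivity),
      one_div, inv_pow, Real.logb_inv, ← Real.rpow_natCast, Real.logb_rpow two_pos (by norm_num)]
      at hlog
    have hmul := mul_le_mul_of_nonneg_left hlog hT.le
    have hcancel : T * (-(l n : ℝ) / T) = -l n := mul_div_cancel₀ _ hT.ne'
    linarith
  have hlinear : Tendsto (fun n : ℕ => T * n - T * Real.logb 2 C) atTop atTop :=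
    tendsto_atTop_add_const_right _ _ (tendsto_natCast_atTop_atTop.const_mul_atTop hT)
  have hlen : Tendsto (fun n => (l n : ℝ)) atTop atTop := by
    refine tendsto_atTop_mono' _ ?_ hlinear
    filter_upwards [hl, hlogb] with n hn hlogn
    have : 0 ≤ T * Q * Real.logb 2 (l n) :=
      mul_nonneg (by positivity) (Real.logb_nonneg one_lt_two (mod_cast hn))
    linarith
  exact tendsto_atTop_mono' _ hlogb <| tendsto_atTop_add_const_right _ _ <|
    ((Real.tendsto_logb_atTop one_lt_two).comp hlen).const_mul_atTop (by positivity)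

theorem IsOptimal.chaitinRandom_of_rightComputable_tsum (hU : IsOptimal U) (hQ : 0 < Q)
    (hQleft : LeftComputable Q) (hT : 0 < T) (hT1 : T < 1)
    (hW : RightComputable (∑' p, wterm U Q T p)) : ChaitinRandom U T T := by
  obtain ⟨C, d, -, hex⟩ := hU.exists_eventually_exists_weight_le hQ hQleft hT hT1 hW
  obtain ⟨l, hl⟩ := skolem.1 hex
  have hlim := tendsto_sub_mul_atTop_of_weight_le hQ hT (hl.mono fun n hn => hn.1)
    (hl.mono fun n hn => hn.2.2)
  refine tendsto_atTop_mono' _ ?_ (tendsto_atTop_add_const_right _ (-(d : ℝ)) hlim)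
  filter_upwards [hl] with n hn
  have : (l n : ℝ) ≤ H U (bits T n) + d := mod_cast hn.2.1
  linarith

end Randomness

section NotLeftComputable

variable {U : Computer} {T : ℝ}

theorem eventually_two_mul_sqrt_add_le {ε : ℝ} (hε : 0 < ε) (c : ℝ) :
    ∀ᶠ n : ℕ in atTop, 2 * (n.sqrt : ℝ) + c ≤ ε * n := by
  have hsqrt : Tendsto (fun n : ℕ => √(n : ℝ)) atTop atTop :=
    Real.tendsto_sqrt_atTop.comp tendsto_natCast_atTop_atTop
  filter_upwards [hsqrt.eventually_ge_atTop ((2 + |c|) / ε), hsqrt.eventually_ge_atTop 1]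
    with n hn hn1
  calc 2 * (n.sqrt : ℝ) + c ≤ 2 * √(n : ℝ) + |c| * √(n : ℝ) := by
        have := le_mul_of_one_le_right (abs_nonneg c) hn1
        linarith [Real.nat_sqrt_le_real_sqrt (a := n), le_abs_self c]
    _ = (2 + |c|) / ε * √(n : ℝ) * ε := by field_simp
    _ ≤ √(n : ℝ) * √(n : ℝ) * ε := by gcongr
    _ = ε * n := by rw [Real.mul_self_sqrt (Nat.cast_nonneg n), mul_comm]

theorem IsOptimal.exists_H_bits_le_two_mul_sqrt_add (hU : IsOptimal U) (hT : 0 < T) (hT1 : T < 1)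
    (hright : RightComputable T) (hleft : LeftComputable T) :
    ∃ d : ℕ, ∀ n, H U (bits T n) ≤ 2 * n.sqrt + d := by
  have hfrac (k : ℕ) : Computable fun z : (ℕ × List Bool) × ℕ =>
      ((z.2 + k : ℕ) : ℚ) / (2 ^ z.1.1 : ℕ) :=
    computable_natCast_div (by fun_prop) (by fun_prop) fun z => by positivity
  have hsearch := rePred_and (rePred_comp (leftComputable_iff_rePred.1 hleft) (hfrac 0))
    (rePred_comp (rightComputable_iff_rePred.1 hright) (hfrac 2))
  obtain ⟨d, hd⟩ := hU.exists_H_bits_le (x := T) (m := fun _ => 0) (.const 0) hsearch 1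
  have hpow (n : ℕ) : (0 : ℝ) < 2 ^ n := by positivity
  refine ⟨d, fun n => hd n [] rfl ?_ fun u => ?_⟩ <;> push_cast <;>
    simp only [add_zero, div_lt_iff₀ (hpow n), lt_div_iff₀ (hpow n)]
  · obtain ⟨u, hu⟩ := Nat.exists_eq_succ_of_ne_zero (Nat.ceil_pos.2 (mul_pos hT (hpow n))).ne'
    refine ⟨u, Nat.lt_ceil.1 (hu ▸ u.lt_succ_self), (Nat.le_ceil _).trans_lt ?_⟩
    exact_mod_cast hu.trans_lt (by omega)
  · rintro ⟨hlow, hhigh⟩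
    have hu : u < binaryValue (bits T n) + 1 :=
      mod_cast hlow.trans (mul_two_pow_lt_binaryValue_bits_add_one hT.le hT1 n)
    have hbits : binaryValue (bits T n) < u + 2 :=
      mod_cast (binaryValue_bits_le_mul_two_pow hT.le hT1 n).trans_lt hhigh
    omega

theorem IsOptimal.not_leftComputable_of_chaitinRandom (hU : IsOptimal U) (hT : 0 < T)
    (hT1 : T < 1) (hright : RightComputable T) (hrandom : ChaitinRandom U T T) :
    ¬ LeftComputable T := by
  intro hleft
  obtain ⟨d, hd⟩ := hU.exists_H_bits_le_two_mul_sqrt_add hT hT1 hright hleft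
  obtain ⟨n, hn, hn'⟩ :=
    ((hrandom.eventually_gt_atTop 0).and (eventually_two_mul_sqrt_add_le hT d)).exists
  have : (H U (bits T n) : ℝ) ≤ 2 * n.sqrt + d := mod_cast hd n
  linarith

end NotLeftComputable

section KraftSums

variable {U : Computer} {Q T t C r : ℝ} {m : ℕ}

theorem IsOptimal.exists_kraftSum_le_div_two_pow_add (hU : IsOptimal U) (m : ℕ) :
    ∃ i : ℕ, i < 2 ^ m ∧ (∃ S : Finset U.domain, (i : ℝ) / 2 ^ m < kraftSum S) ∧
      ∀ S : Finset U.domain, kraftSum S ≤ (i : ℝ) / 2 ^ m + (1 / 2) ^ m := by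
  have hpow : (0 : ℝ) < 2 ^ m := by positivity
  have hnonneg (p : U.domain) : (0 : ℝ) ≤ (1 / 2) ^ (p : List Bool).length := by positivity
  have hsum : Summable fun p : U.domain => (1 / 2 : ℝ) ^ (p : List Bool).length :=
    summable_of_sum_le hnonneg hU.kraftSum_le_one
  set Ω : ℝ := ∑' p : U.domain, (1 / 2 : ℝ) ^ (p : List Bool).length
  have hlub : IsLUB (Set.range (kraftSum (U := U))) Ω := isLUB_hasSum hnonneg hsum.hasSum
  have hpos : 0 < Ω := by
    obtain ⟨p₀, hp₀, -⟩ := hU.exists_mem_domain_length_pos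
    exact hsum.tsum_pos hnonneg ⟨p₀, hp₀⟩ (by positivity)
  have hle : Ω ≤ 1 := hsum.tsum_le_of_sum_le hU.kraftSum_le_one
  obtain ⟨i, hi⟩ := Nat.exists_eq_succ_of_ne_zero (Nat.ceil_pos.2 (mul_pos hpos hpow)).ne'
  have hlow : (i : ℝ) / 2 ^ m < Ω := (div_lt_iff₀ hpow).2 (Nat.lt_ceil.1 (hi ▸ i.lt_succ_self))
  have hhigh : Ω ≤ (i : ℝ) / 2 ^ m + (1 / 2) ^ m := by
    rw [one_div, inv_pow, ← one_div, ← add_div, le_div_iff₀ hpow]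
    exact_mod_cast (Nat.le_ceil _).trans_eq (congrArg Nat.cast hi)
  refine ⟨i, ?_, ?_, fun S => (hsum.sum_le_tsum S fun p _ => hnonneg p).trans hhigh⟩
  · exact_mod_cast (div_lt_one hpow).1 (hlow.trans_le hle)
  · obtain ⟨_, ⟨S, rfl⟩, hS, -⟩ := hlub.exists_between hlow
    exact ⟨S, hS⟩

theorem kraftSum_lt_of_disjoint {S S' : Finset U.domain} (hS : r < kraftSum S)
    (hle : ∀ S : Finset U.domain, kraftSum S ≤ r + (1 / 2) ^ m)
    (hSS' : Disjoint S S') : kraftSum S' < (1 / 2) ^ m := by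
  have := hle (S.disjUnion S' hSS')
  rw [kraftSum, Finset.sum_disjUnion, ← kraftSum, ← kraftSum] at this
  linarith

theorem lt_length_of_notMem {S : Finset U.domain} (hS : r < kraftSum S)
    (hle : ∀ S : Finset U.domain, kraftSum S ≤ r + (1 / 2) ^ m)
    {p : U.domain} (hp : p ∉ S) : m < (p : List Bool).length := by
  have := kraftSum_lt_of_disjoint hS hle (Finset.disjoint_singleton_right.2 hp)
  rwa [kraftSum, Finset.sum_singleton,
    pow_lt_pow_iff_right_of_lt_one₀ (by norm_num) (by norm_num)] at this

theorem two_rpow_neg_div_le (ht : 0 < t) (ht1 : t ≤ 1) {l : ℕ} (hml : m ≤ l) :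
    (2 : ℝ) ^ (-(l : ℝ) / t) ≤ 2 ^ ((m : ℝ) - m / t) * (1 / 2) ^ l := by
  rw [← two_rpow_neg_natCast, ← Real.rpow_add two_pos]
  refine Real.rpow_le_rpow_of_exponent_le one_le_two ?_
  calc -(l : ℝ) / t = -(l * (1 / t - 1)) - l := by ring
    _ ≤ -(m * (1 / t - 1)) - l := by
      have := sub_nonneg.2 (one_le_one_div ht ht1)
      gcongr
    _ = m - m / t + -l := by ring

theorem IsOptimal.tsum_wterm_le_sum_add (hU : IsOptimal U) (hT : 0 < T) (hT1 : T < 1)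
    (ht : 0 < t) (ht1 : t ≤ 1) (hC : 0 ≤ C)
    (hweight : ∀ l, weight Q T l ≤ C * 2 ^ (-(l : ℝ) / t)) {S : Finset U.domain}
    (hS : r < kraftSum S) (hle : ∀ S : Finset U.domain, kraftSum S ≤ r + (1 / 2) ^ m) :
    ∑' p, wterm U Q T p ≤ ∑ p ∈ S, wterm U Q T p + C * 2 ^ (-(m : ℝ) / t) := by
  classical
  refine (hU.summable_wterm Q hT hT1).tsum_le_of_sum_le fun S' => ?_
  have hterm : ∀ p ∈ S' \ S, wterm U Q T p ≤
      C * (2 ^ ((m : ℝ) - m / t) * (1 / 2) ^ (p : List Bool).length) := fun p hp =>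
    (hweight _).trans (mul_le_mul_of_nonneg_left (two_rpow_neg_div_le ht ht1
      (lt_length_of_notMem hS hle (Finset.mem_sdiff.1 hp).2).le) hC)
  calc ∑ p ∈ S', wterm U Q T p
      ≤ ∑ p ∈ S, wterm U Q T p + ∑ p ∈ S' \ S, wterm U Q T p := by
        rw [← Finset.sum_union Finset.disjoint_sdiff, Finset.union_sdiff_self_eq_union]
        exact Finset.sum_le_sum_of_subset_of_nonneg Finset.subset_union_right
          fun p _ _ => weight_nonneg Q T _
    _ ≤ ∑ p ∈ S, wterm U Q T p + C * (2 ^ ((m : ℝ) - m / t) * kraftSum (S' \ S)) := by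
        rw [kraftSum, Finset.mul_sum, Finset.mul_sum]
        gcongr with p hp
        exact hterm p hp
    _ ≤ ∑ p ∈ S, wterm U Q T p + C * (2 ^ ((m : ℝ) - m / t) * (1 / 2) ^ m) := by
        have := (kraftSum_lt_of_disjoint hS hle (Finset.disjoint_sdiff (t := S'))).le
        gcongr
    _ = ∑ p ∈ S, wterm U Q T p + C * 2 ^ (-(m : ℝ) / t) := by
        rw [← two_rpow_neg_natCast, ← Real.rpow_add two_pos]
        ring_nf

theorem IsOptimal.exists_string_forall_lt_kraftSum (hU : IsOptimal U) (hT : 0 < T) (hT1 : T < 1)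
    (ht : 0 < t) (ht1 : t ≤ 1) (hC : 0 ≤ C)
    (hweight : ∀ l, weight Q T l ≤ C * 2 ^ (-(l : ℝ) / t)) (m : ℕ) :
    ∃ y : List Bool, y.length = m ∧
      (∃ S : Finset U.domain, (binaryValue y : ℝ) / 2 ^ m < kraftSum S) ∧
      ∀ S : Finset U.domain, (binaryValue y : ℝ) / 2 ^ m < kraftSum S →
        (∀ p : U.domain, (p : List Bool).length ≤ m → p ∈ S) ∧
          ∑' p, wterm U Q T p ≤ ∑ p ∈ S, wterm U Q T p + C * 2 ^ (-(m : ℝ) / t) := by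
  obtain ⟨i, hi, hex, hle⟩ := hU.exists_kraftSum_le_div_two_pow_add m
  obtain ⟨y, hy, rfl⟩ := exists_length_eq_binaryValue_eq hi
  refine ⟨y, hy, hex, fun S hS => ⟨fun p hp => ?_, ?_⟩⟩
  · by_contra hnot
    exact (lt_length_of_notMem hS hle hnot).not_ge hp
  · exact hU.tsum_wterm_le_sum_add hT hT1 ht ht1 hC hweight hS hle

end KraftSums

section Compressibility

variable {U : Computer} {Q T t : ℝ}

/-- The Kraft sum of the programs listed in `F`. -/
noncomputable def listKraftSum (F : List (List Bool × List Bool)) : ℝ :=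
  (F.map fun z => (1 / 2) ^ z.1.length).sum

theorem lowerSemicomputable_listKraftSum : LowerSemicomputable listKraftSum := by
  have hterm : Computable fun p : Unit × List Bool × List Bool =>
      ((1 : ℕ) : ℚ) / (2 ^ p.2.1.length : ℕ) :=
    computable_natCast_div (by fun_prop) (by fun_prop) fun p => by positivity
  have hsum := (lowerSemicomputable_ratCast hterm).list_sum.comp
    (g := fun F : List (List Bool × List Bool) => ((), F)) (by fun_prop)
  exact REPred.of_eq hsum fun p => by simp [listKraftSum]

theorem Computer.IsSubgraph.listKraftSum_eq {F : List (List Bool × List Bool)}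
    (hF : U.IsSubgraph F) : listKraftSum F = kraftSum (U.programs F) :=
  hF.sum_map_fst fun p => (1 / 2) ^ p.length

/-- For `w = W(Q, T)`, the list `F` certifies that `T * 2 ^ n` lies between `u - O(1)` and `u + K`,
provided that its Kraft sum, which exceeds the dyadic number with binary digits `y`, is close enough
to the halting probability. -/
structure IsBracket (U : Computer) (Q w : ℝ) (K n : ℕ) (y : List Bool) (u : ℕ)
    (F : List (List Bool × List Bool)) : Prop where
  isSubgraph : U.IsSubgraph F
  lt_listKraftSum : (binaryValue y : ℝ) / 2 ^ y.length < listKraftSum F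
  le_two_pow : u ≤ 2 ^ n
  listWeight_lt : listWeight Q (u / 2 ^ n) F < w
  lt_listWeight : w < listWeight Q ((u + K) / 2 ^ n) F

theorem rePred_exists_isBracket (U : Computer) (hQ : 0 < Q) (hQc : ComputableReal Q) {w : ℝ}
    (hw : ComputableReal w) (K : ℕ) :
    REPred fun z : (ℕ × List Bool) × ℕ => ∃ F, IsBracket U Q w K z.1.1 z.1.2 z.2 F := by
  have hn : Computable fun z : ((ℕ × List Bool) × ℕ) × List (List Bool × List Bool) =>
      2 ^ z.1.1.1 := computable_nat_pow (.const 2) (Computable.fst.comp (Computable.fst.comp .fst))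
  have hy : Computable fun z : ((ℕ × List Bool) × ℕ) × List (List Bool × List Bool) =>
      z.1.1.2 := Computable.snd.comp (Computable.fst.comp .fst)
  have hu : Computable fun z : ((ℕ × List Bool) × ℕ) × List (List Bool × List Bool) =>
      z.1.2 := Computable.snd.comp .fst
  have hkraft : Computable fun z : ((ℕ × List Bool) × ℕ) × List (List Bool × List Bool) =>
      (z.2, (binaryValue z.1.1.2 : ℚ) / (2 ^ z.1.1.2.length : ℕ)) :=
    .pair .snd (computable_natCast_div (computable_binaryValue.comp hy)
      (computable_nat_pow (.const 2) (computable_list_length hy)) fun z => by positivity)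
  have hfrac (k : ℕ) : Computable fun z : ((ℕ × List Bool) × ℕ) × List (List Bool × List Bool) =>
      (((z.1.2 + k : ℕ) : ℚ) / (2 ^ z.1.1.1 : ℕ), z.2) :=
    .pair (computable_natCast_div (computable_nat_add hu (.const k)) hn fun z => by positivity) .snd
  have h := rePred_and (rePred_comp U.rePred_isSubgraph .snd) <|
    rePred_and (rePred_comp lowerSemicomputable_listKraftSum hkraft) <|
    rePred_and (rePred_nat_le hu hn) <|
    rePred_and (rePred_comp (rePred_listWeight_lt hQ hQc.rightComputable hw.leftComputable)
        (hfrac 0)) <|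
      rePred_comp (rePred_lt_listWeight hQ hQc.leftComputable hw.rightComputable) (hfrac K)
  refine (rePred_exists h).of_eq fun z => exists_congr fun F => ?_
  push_cast
  rw [add_zero]
  exact ⟨fun ⟨h₁, h₂, h₃, h₄, h₅⟩ => ⟨h₁, h₂, h₃, h₄, h₅⟩,
    fun ⟨h₁, h₂, h₃, h₄, h₅⟩ => ⟨h₁, h₂, h₃, h₄, h₅⟩⟩

section Bracketing

variable {C : ℝ} {k n : ℕ} {F : List (List Bool × List Bool)} {p₀ : U.domain}

theorem tsum_lt_listWeight_of_mul_two_pow_add_le (hT : 0 < T)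
    (hk : C < wterm U Q T p₀ * (Real.log 2 * (p₀ : List Bool).length) * k)
    (hF : U.IsSubgraph F) (hp₀ : p₀ ∈ U.programs F)
    (hFC : ∑' p, wterm U Q T p ≤ ∑ p ∈ U.programs F, wterm U Q T p + C * (1 / 2) ^ n)
    {v : ℝ} (hv : T * 2 ^ n + k ≤ v) (hvn : v ≤ 2 ^ n) :
    ∑' p, wterm U Q T p < listWeight Q (v / 2 ^ n) F := by
  have hpow : (0 : ℝ) < 2 ^ n := by positivity
  have hgap : k * (1 / 2) ^ n ≤ v / 2 ^ n - T := by
    rw [one_div, inv_pow, ← div_eq_mul_inv, le_sub_iff_add_le', le_div_iff₀ hpow, add_mul,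
      div_mul_cancel₀ _ hpow.ne']
    exact hv
  have hTv : T ≤ v / 2 ^ n := sub_nonneg.1 (le_trans (by positivity) hgap)
  have hslope : 0 ≤ wterm U Q T p₀ * (Real.log 2 * (p₀ : List Bool).length) :=
    mul_nonneg (weight_nonneg Q T _) (by positivity)
  rw [hF.listWeight_eq]
  calc ∑' p, wterm U Q T p
      ≤ ∑ p ∈ U.programs F, wterm U Q T p + C * (1 / 2) ^ n := hFC
    _ < ∑ p ∈ U.programs F, wterm U Q T p +
          wterm U Q T p₀ * (Real.log 2 * (p₀ : List Bool).length) * k * (1 / 2) ^ n := by gcongr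
    _ ≤ ∑ p ∈ U.programs F, wterm U Q T p +
          wterm U Q T p₀ * (Real.log 2 * (p₀ : List Bool).length) * (v / 2 ^ n - T) := by
        rw [mul_assoc _ (k : ℝ)]
        gcongr
    _ ≤ ∑ p ∈ U.programs F, wterm U Q (v / 2 ^ n) p :=
        sum_wterm_add_le_sum_wterm hT hTv ((div_le_one hpow).2 hvn) hp₀

theorem IsOptimal.exists_isBracket (hU : IsOptimal U) (hT : 0 < T) (hT1 : T < 1)
    (hk : C < wterm U Q T p₀ * (Real.log 2 * (p₀ : List Bool).length) * k)
    (hF : U.IsSubgraph F) (hp₀ : p₀ ∈ U.programs F)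
    (hFC : ∑' p, wterm U Q T p ≤ ∑ p ∈ U.programs F, wterm U Q T p + C * (1 / 2) ^ n)
    {y : List Bool} (hy : (binaryValue y : ℝ) / 2 ^ y.length < listKraftSum F)
    (hn : 1 < T * 2 ^ n) (hkn : T * 2 ^ n + (k + 1) ≤ 2 ^ n) :
    ∃ u, IsBracket U Q (∑' p, wterm U Q T p) (k + 1) n y u F := by
  have hpow : (0 : ℝ) < 2 ^ n := by positivity
  obtain ⟨u, hu⟩ := Nat.exists_eq_succ_of_ne_zero (Nat.ceil_pos.2 (mul_pos hT hpow)).ne'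
  have hlow : (u : ℝ) < T * 2 ^ n := Nat.lt_ceil.1 (hu ▸ u.lt_succ_self)
  have hhigh : T * 2 ^ n ≤ u + 1 := (Nat.le_ceil _).trans_eq (mod_cast hu)
  have hpos : 0 < u := Nat.cast_pos.1 (by linarith : (0 : ℝ) < u)
  refine ⟨u, hF, hy, ?_, ?_, ?_⟩
  · exact_mod_cast (show (u : ℝ) ≤ 2 ^ n by linarith)
  · rw [hF.listWeight_eq]
    exact (hU.sum_wterm_lt_sum_wterm (by positivity) ((div_lt_iff₀ hpow).2 hlow)
      ⟨p₀, hp₀⟩).trans_le (hU.sum_wterm_le_tsum Q hT hT1 _)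
  · refine tsum_lt_listWeight_of_mul_two_pow_add_le hT hk hF hp₀ hFC ?_ ?_ <;> push_cast <;>
      linarith

theorem IsBracket.le_and_le (hU : IsOptimal U) (hT : 0 < T) (hT1 : T < 1)
    (hk : C < wterm U Q T p₀ * (Real.log 2 * (p₀ : List Bool).length) * k)
    (hp₀ : p₀ ∈ U.programs F)
    (hFC : ∑' p, wterm U Q T p ≤ ∑ p ∈ U.programs F, wterm U Q T p + C * (1 / 2) ^ n)
    {y : List Bool} {u : ℕ} (h : IsBracket U Q (∑' p, wterm U Q T p) (k + 1) n y u F) :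
    u ≤ binaryValue (bits T n) + (k + 1) ∧ binaryValue (bits T n) ≤ u + (k + 1) := by
  constructor
  · by_contra! hlt
    have hT2n := mul_two_pow_lt_binaryValue_bits_add_one hT.le hT1 n
    have hlt' : (binaryValue (bits T n) : ℝ) + (k + 1) < u := mod_cast hlt
    exact h.listWeight_lt.not_gt (tsum_lt_listWeight_of_mul_two_pow_add_le hT hk h.isSubgraph hp₀
      hFC (by linarith) (mod_cast h.le_two_pow))
  · have hTu := (hU.lt_iff_exists_tsum_lt_listWeight Q hT hT1 (by positivity)).2
      ⟨F, h.isSubgraph, h.lt_listWeight⟩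
    have hbits := (binaryValue_bits_le_mul_two_pow hT.le hT1 n).trans_lt
      ((lt_div_iff₀ (by positivity)).1 hTu)
    exact_mod_cast hbits.le

end Bracketing

theorem IsOptimal.exists_eventually_H_bits_le (hU : IsOptimal U) (hQ : 0 < Q)
    (hQc : ComputableReal Q) (hT : 0 < T) (hTt : T < t) (ht1 : t ≤ 1)
    (hW : ComputableReal (∑' p, wterm U Q T p)) {m : ℕ → ℕ} (hm : Computable m)
    (hmt : ∀ n, t * n ≤ m n) :
    ∃ d : ℕ, ∀ᶠ n in atTop, H U (bits T n) ≤ 2 * n.sqrt + m n + d := by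
  have ht : 0 < t := hT.trans hTt
  have hT1 : T < 1 := hTt.trans_le ht1
  obtain ⟨p₀, hp₀, hlen⟩ := hU.exists_mem_domain_length_pos
  obtain ⟨C, hC, hweight⟩ := exists_weight_le Q hT hTt
  have hslope : 0 < wterm U Q T ⟨p₀, hp₀⟩ * (Real.log 2 * p₀.length) :=
    mul_pos (weight_pos hlen) (by positivity)
  obtain ⟨k, hk⟩ := exists_nat_gt (C / (wterm U Q T ⟨p₀, hp₀⟩ * (Real.log 2 * p₀.length)))
  rw [div_lt_iff₀' hslope] at hk
  obtain ⟨d, hd⟩ := hU.exists_H_bits_le (x := T) hm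
    (rePred_exists_isBracket U hQ hQc hW (k + 1)) (k + 1)
  have hpow : Tendsto (fun n : ℕ => (2 : ℝ) ^ n) atTop atTop :=
    tendsto_pow_atTop_atTop_of_one_lt one_lt_two
  refine ⟨d, ?_⟩
  filter_upwards [(hpow.const_mul_atTop hT).eventually_gt_atTop 1,
    (hpow.const_mul_atTop (sub_pos.2 hT1)).eventually_ge_atTop (k + 1 : ℝ),
    (tendsto_natCast_atTop_atTop.const_mul_atTop ht).eventually_ge_atTop (p₀.length : ℝ)]
    with n hn hkn hp₀n
  obtain ⟨y, hy, ⟨S, hS⟩, happrox⟩ :=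
    hU.exists_string_forall_lt_kraftSum hT hT1 ht ht1 hC.le hweight (m n)
  have htail : C * 2 ^ (-(m n : ℝ) / t) ≤ C * (1 / 2) ^ n := by
    rw [← two_rpow_neg_natCast, neg_div]
    gcongr
    · exact one_le_two
    · exact (le_div_iff₀' ht).2 (hmt n)
  have hp₀m : p₀.length ≤ m n := mod_cast hp₀n.trans (hmt n)
  refine hd n y hy ?_ fun u ⟨F, hF⟩ => ?_
  · obtain ⟨F, hF, rfl⟩ := U.exists_isSubgraph_programs_eq S
    obtain ⟨hmem, hsum⟩ := happrox _ hS
    obtain ⟨u, hu⟩ := hU.exists_isBracket hT hT1 hk hF (hmem _ hp₀m) (hsum.trans (by gcongr))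
      (by rwa [hF.listKraftSum_eq, hy]) hn (by linarith)
    exact ⟨u, F, hu⟩
  · obtain ⟨hmem, hsum⟩ := happrox (U.programs F) <| by
      rw [← hy, ← hF.isSubgraph.listKraftSum_eq]
      exact hF.lt_listKraftSum
    exact hF.le_and_le hU hT hT1 hk (hmem _ hp₀m) (hsum.trans (by gcongr))

theorem exists_computable_mul_le_and_le_mul_add_one {s : ℚ} (hs : 0 ≤ s) :
    ∃ m : ℕ → ℕ, Computable m ∧ ∀ n, s * n ≤ m n ∧ m n ≤ s * n + 1 := by
  have hfloor (n : ℕ) : ⌊s * n⌋₊ = s.num.toNat * n / s.den := by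
    have hnum : (s.num.toNat : ℚ) = s.num := mod_cast Int.toNat_of_nonneg (Rat.num_nonneg.2 hs)
    rw [← Nat.floor_div_eq_div (K := ℚ)]
    push_cast
    rw [hnum, mul_div_right_comm, Rat.num_div_den]
  have hcomp : Computable fun n : ℕ => s.num.toNat * n / s.den + 1 := by fun_prop
  refine ⟨fun n => ⌊s * n⌋₊ + 1, hcomp.of_eq fun n => by rw [hfloor], fun n => ?_⟩
  push_cast
  exact ⟨(Nat.lt_floor_add_one _).le, by gcongr; exact Nat.floor_le (by positivity)⟩

theorem IsOptimal.dCompressible_of_computableReal_tsum (hU : IsOptimal U) (hQ : 0 < Q)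
    (hQc : ComputableReal Q) (hT : 0 < T) (hT1 : T < 1)
    (hW : ComputableReal (∑' p, wterm U Q T p)) : DCompressible U T T := by
  refine le_of_forall_gt_imp_ge_of_dense fun D hTD => ?_
  obtain ⟨t, hTt, htD⟩ := exists_rat_btwn (lt_min hTD hT1)
  obtain ⟨htD, ht1⟩ := lt_min_iff.1 htD
  obtain ⟨m, hm, hmt⟩ :=
    exists_computable_mul_le_and_le_mul_add_one (s := t) (mod_cast (hT.trans hTt).le)
  obtain ⟨d, hd⟩ := hU.exists_eventually_H_bits_le hQ hQc hT hTt ht1.le hW hm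
    fun n => mod_cast (hmt n).1
  refine limsup_le_of_le
    (isBoundedUnder_of ⟨0, fun n => by positivity⟩ : IsBoundedUnder _ _ _).isCoboundedUnder_le ?_
  filter_upwards [hd, eventually_two_mul_sqrt_add_le (sub_pos.2 htD) (d + 1),
    eventually_gt_atTop 0] with n hn hsqrt hpos
  rw [div_le_iff₀ (mod_cast hpos)]
  have hH : (H U (bits T n) : ℝ) ≤ 2 * n.sqrt + m n + d := mod_cast hn
  have hmn : (m n : ℝ) ≤ t * n + 1 := mod_cast (hmt n).2
  linarith

end Compressibility

/-- **Theorem (paper Thm 20, fixed point theorem on compression rate II).**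
Let `Q` be a computable real with `Q > 0` and `T ∈ (0,1)`. If
`W(Q,T) = ∑_{p ∈ dom U} |p|^Q·2^{-|p|/T}` is a computable real number, then
`T` is right-computable but not left-computable, and `T` is Chaitin
`T`-random and `T`-compressible. -/
theorem fixed_point_compression_rate_II (U : Computer) (hU : IsOptimal U)
    (Q : ℝ) (hQpos : 0 < Q) (hQc : ComputableReal Q)
    (T : ℝ) (hT0 : 0 < T) (hT1 : T < 1)
    (hW : ComputableReal (∑' p, wterm U Q T p)) :
    RightComputable T ∧ ¬ LeftComputable T ∧
    ChaitinRandom U T T ∧ DCompressible U T T := by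
  have hright := hU.rightComputable_of_rightComputable_tsum hQpos hQc.leftComputable hT0 hT1
    hW.rightComputable
  have hrandom := hU.chaitinRandom_of_rightComputable_tsum hQpos hQc.leftComputable hT0 hT1
    hW.rightComputable
  exact ⟨hright, hU.not_leftComputable_of_chaitinRandom hT0 hT1 hright hrandom, hrandom,
    hU.dCompressible_of_computableReal_tsum hQpos hQc hT0 hT1 hW⟩
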